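/- Assume the Riemann Hypothesis. Then for every real number x ≥ 2, there exists a Goldbach number in the interval (x, x + 123·(log x)²], i.e., there exists an integer n with x < n ≤ x + 123·(log x)² such that n = p + q for some odd primes p and q. -/

import Mathlib

namespace GoldbachRH

open Complex Filter Topology MeasureTheory

theorem abs_log_one_add_inv_sub_inv_le (n : ℕ) :
    |Real.log (1 + 1 / (n + 1 : ℝ)) - 1 / (n + 1 : ℝ)| ≤ 1 / (n + 1 : ℝ) ^ 2 := by
  have hn : (0 : ℝ) < n + 1 := by positivity
  have h1 : Real.log (1 + 1 / (n + 1 : ℝ)) ≤ 1 / (n + 1 : ℝ) := by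
    have := Real.log_le_sub_one_of_pos (x := 1 + 1 / (n + 1 : ℝ)) (by positivity)
    linarith
  have h2 : 1 - (1 + 1 / (n + 1 : ℝ))⁻¹ ≤ Real.log (1 + 1 / (n + 1 : ℝ)) :=
    Real.one_sub_inv_le_log_of_pos (by positivity)
  have h3 : 1 / (n + 1 : ℝ) - (1 - (1 + 1 / (n + 1 : ℝ))⁻¹) ≤ 1 / (n + 1 : ℝ) ^ 2 := by
    have : 1 / (n + 1 : ℝ) - (1 - (1 + 1 / (n + 1 : ℝ))⁻¹) =
      1 / ((n + 1 : ℝ) * (n + 2)) := by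
      field_simp
      ring
    rw [this]
    gcongr
    nlinarith
  rw [abs_le]
  constructor <;> linarith

theorem norm_log_sub_inv_le (n : ℕ) {R : ℝ} {w : ℂ} (hw : 0 ≤ w.re) (hR : ‖w‖ ≤ R) :
    ‖((Real.log (1 + 1 / (n + 1 : ℝ)) : ℝ) : ℂ) - 1 / ((n + 1 : ℂ) + w)‖
      ≤ (1 + R) / (n + 1 : ℝ) ^ 2 := by
  have hn : (0 : ℝ) < n + 1 := by positivity
  have hden : (n + 1 : ℝ) ≤ ‖(n + 1 : ℂ) + w‖ := by
    have := Complex.re_le_norm ((n + 1 : ℂ) + w)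
    simp at this
    linarith
  have hne : (n + 1 : ℂ) + w ≠ 0 := by
    rw [← norm_pos_iff]
    linarith
  have hne' : (n + 1 : ℂ) ≠ 0 := by exact_mod_cast hn.ne'
  have e : ((Real.log (1 + 1 / (n + 1 : ℝ)) : ℝ) : ℂ) - 1 / ((n + 1 : ℂ) + w)
      = ((Real.log (1 + 1 / (n + 1 : ℝ)) - 1 / (n + 1 : ℝ) : ℝ) : ℂ) +
        w / ((n + 1 : ℂ) * ((n + 1 : ℂ) + w)) := by
    push_cast
    field_simp
    ring
  rw [e]
  refine (norm_add_le _ _).trans ?_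
  rw [add_div]
  refine add_le_add ?_ ?_
  · rw [Complex.norm_real]
    exact abs_log_one_add_inv_sub_inv_le n
  · rw [norm_div, norm_mul]
    have : ‖(n + 1 : ℂ)‖ = n + 1 := by
      have := Complex.norm_natCast (n + 1)
      push_cast at this
      exact this
    rw [this, pow_two]
    have hR0 : 0 ≤ R := (norm_nonneg w).trans hR
    gcongr

theorem summable_one_div_succ_sq (C : ℝ) : Summable fun n : ℕ => C / (n + 1 : ℝ) ^ 2 := by
  have h := (summable_nat_add_iff 1).mpr (Real.summable_one_div_nat_pow.mpr (one_lt_two))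
  simpa [div_eq_mul_inv] using h.mul_left C

/-- Terms of the series for `log Γ(w + 1)`. -/
noncomputable def logGammaTerm (n : ℕ) (w : ℂ) : ℂ :=
  w * ((Real.log (1 + 1 / (n + 1 : ℝ)) : ℝ) : ℂ) - Complex.log (1 + w / (n + 1))

theorem one_add_div_mem_slitPlane (n : ℕ) {w : ℂ} (hw : 0 ≤ w.re) :
    1 + w / (n + 1) ∈ slitPlane := by
  left
  have : (w / ((n : ℂ) + 1)).re = w.re / (n + 1) := by
    have := Complex.div_ofReal_re w (n + 1)
    push_cast at this
    exact this
  simp only [add_re, one_re, this]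
  positivity

theorem hasDerivAt_logGammaTerm (n : ℕ) {w : ℂ} (hw : 0 ≤ w.re) :
    HasDerivAt (logGammaTerm n)
      (((Real.log (1 + 1 / (n + 1 : ℝ)) : ℝ) : ℂ) - 1 / ((n + 1 : ℂ) + w)) w := by
  have h1 : HasDerivAt (fun w : ℂ => 1 + w / ((n : ℂ) + 1)) (1 / ((n : ℂ) + 1)) w := by
    simpa using ((hasDerivAt_id w).div_const ((n : ℂ) + 1)).const_add 1
  have h2 := h1.clog (one_add_div_mem_slitPlane n hw)
  have h3 := ((hasDerivAt_id w).mul_const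
    ((Real.log (1 + 1 / (n + 1 : ℝ)) : ℝ) : ℂ)).sub h2
  refine h3.congr_deriv ?_
  have hn : ((n : ℂ) + 1) ≠ 0 := by exact_mod_cast Nat.succ_ne_zero n
  have hne := slitPlane_ne_zero (one_add_div_mem_slitPlane n hw)
  have hne' : (n + 1 : ℂ) + w ≠ 0 := by
    intro h
    apply hne
    field_simp
    rw [h, mul_zero]
  rw [one_mul]
  field_simp

theorem summable_logGammaTerm_and_hasDerivAt {w : ℂ} (hw : 0 < w.re) :
    (Summable fun n => logGammaTerm n w) ∧ HasDerivAt (fun z => ∑' n, logGammaTerm n z)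
      (∑' n : ℕ, (((Real.log (1 + 1 / (n + 1 : ℝ)) : ℝ) : ℂ) - 1 / ((n + 1 : ℂ) + w))) w := by
  set R : ℝ := ‖w‖ + 2
  have hopen : IsOpen ({z : ℂ | 0 < z.re} ∩ Metric.ball 0 R) :=
    (isOpen_lt continuous_const continuous_re).inter Metric.isOpen_ball
  have hconn : IsPreconnected ({z : ℂ | 0 < z.re} ∩ Metric.ball 0 R) :=
    ((convex_halfSpace_re_gt 0).inter (convex_ball _ _)).isPreconnected
  have hder : ∀ (n : ℕ) (y : ℂ), y ∈ {z : ℂ | 0 < z.re} ∩ Metric.ball 0 R →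
      HasDerivAt (logGammaTerm n)
        (((Real.log (1 + 1 / (n + 1 : ℝ)) : ℝ) : ℂ) - 1 / ((n + 1 : ℂ) + y)) y :=
    fun n y hy => hasDerivAt_logGammaTerm n (le_of_lt hy.1)
  have hbd : ∀ (n : ℕ) (y : ℂ), y ∈ {z : ℂ | 0 < z.re} ∩ Metric.ball 0 R →
      ‖((Real.log (1 + 1 / (n + 1 : ℝ)) : ℝ) : ℂ) - 1 / ((n + 1 : ℂ) + y)‖
        ≤ (1 + R) / (n + 1 : ℝ) ^ 2 :=
    fun n y hy => norm_log_sub_inv_le n (le_of_lt hy.1) (mem_ball_zero_iff.mp hy.2).le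
  have h1 : (1 : ℂ) ∈ {z : ℂ | 0 < z.re} ∩ Metric.ball 0 R := by
    refine ⟨by simp, mem_ball_zero_iff.mpr ?_⟩
    have := norm_nonneg w
    simp only [norm_one, R]
    linarith
  have hs1 : Summable fun n => logGammaTerm n 1 := by
    have : (fun n => logGammaTerm n 1) = fun _ => 0 := by
      funext n
      simp only [logGammaTerm, one_mul]
      rw [Complex.ofReal_log (by positivity)]
      push_cast
      ring
    rw [this]
    exact summable_zero
  have hwR : w ∈ {z : ℂ | 0 < z.re} ∩ Metric.ball 0 R :=
    ⟨hw, mem_ball_zero_iff.mpr (by simp [R])⟩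
  exact ⟨summable_of_summable_hasDerivAt_of_isPreconnected (summable_one_div_succ_sq _)
      hopen hconn hder hbd h1 hs1 hwR,
    hasDerivAt_tsum_of_isPreconnected (summable_one_div_succ_sq _)
      hopen hconn hder hbd h1 hs1 hwR⟩

theorem exp_sum_logGammaTerm (N : ℕ) {w : ℂ} (hw : 0 < w.re) :
    Complex.exp (∑ n ∈ Finset.range N, logGammaTerm n w) =
      w * GammaSeq w N * (((N + 1 : ℕ) : ℂ) ^ w / (N : ℂ) ^ w) ∨ N = 0 := by
  rcases Nat.eq_zero_or_pos N with h0 | hN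
  · exact Or.inr h0
  left
  have hprod : ∀ N : ℕ, Complex.exp (∑ n ∈ Finset.range N, logGammaTerm n w) =
      ((N + 1 : ℕ) : ℂ) ^ w * (N.factorial : ℂ) / ∏ j ∈ Finset.range N, (w + (j + 1 : ℕ)) := by
    intro N
    induction N with
    | zero => simp
    | succ N ih =>
      rw [Finset.sum_range_succ, Complex.exp_add, ih, Finset.prod_range_succ]
      have hN : ((N : ℂ) + 1) ≠ 0 := by exact_mod_cast Nat.succ_ne_zero N
      have hterm : Complex.exp (logGammaTerm N w) =
          (((N + 1 + 1 : ℕ) : ℂ) ^ w / ((N + 1 : ℕ) : ℂ) ^ w) / (1 + w / (N + 1)) := by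
        rw [logGammaTerm, Complex.exp_sub, Complex.exp_log
          (slitPlane_ne_zero (one_add_div_mem_slitPlane N hw.le))]
        congr 1
        have : (1 + 1 / (N + 1 : ℝ)) = ((N + 1 + 1 : ℕ) : ℝ) / ((N + 1 : ℕ) : ℝ) := by
          push_cast
          field_simp
        rw [this, Real.log_div (by positivity) (by positivity), Complex.ofReal_sub, mul_sub,
          Complex.exp_sub, Complex.cpow_def_of_ne_zero (Nat.cast_ne_zero.mpr (Nat.succ_ne_zero _)),
          Complex.cpow_def_of_ne_zero (Nat.cast_ne_zero.mpr (Nat.succ_ne_zero _)),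
          ← Complex.natCast_log, ← Complex.natCast_log, mul_comm w, mul_comm w]
      rw [hterm]
      have hpow : (((N + 1 : ℕ) : ℂ) ^ w) ≠ 0 := by
        rw [Complex.cpow_ne_zero_iff]
        exact Or.inl (Nat.cast_ne_zero.mpr (Nat.succ_ne_zero _))
      have h1 := slitPlane_ne_zero (one_add_div_mem_slitPlane N hw.le)
      have h2 : (w + ((N + 1 : ℕ) : ℂ)) = (1 + w / (N + 1)) * (N + 1) := by
        push_cast
        field_simp
        ring
      rw [h2, Nat.factorial_succ]
      have hp : ∏ j ∈ Finset.range N, (w + (j + 1 : ℕ)) ≠ 0 := by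
        rw [Finset.prod_ne_zero_iff]
        intro j _ h
        have := congrArg Complex.re h
        simp at this
        have : (0 : ℝ) ≤ j := by positivity
        linarith
      push_cast at *
      field_simp
  rw [hprod, GammaSeq, Finset.prod_range_succ']
  have hw0 : w ≠ 0 := by
    rintro rfl
    simp at hw
  have hpow : ((N : ℂ) ^ w) ≠ 0 := by
    rw [Complex.cpow_ne_zero_iff]
    left
    exact_mod_cast hN.ne'
  simp only [Nat.cast_zero, add_zero]
  field_simp

theorem exp_tsum_logGammaTerm {w : ℂ} (hw : 0 < w.re) :
    Complex.exp (∑' n, logGammaTerm n w) = Complex.Gamma (w + 1) := by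
  have hs := (summable_logGammaTerm_and_hasDerivAt hw).1
  have h1 := (Complex.continuous_exp.tendsto _).comp hs.hasSum.tendsto_sum_nat
  have hw0 : w ≠ 0 := by
    rintro rfl
    simp at hw
  have hratio : Tendsto (fun N : ℕ => ((N + 1 : ℕ) : ℂ) ^ w / (N : ℂ) ^ w) atTop (𝓝 1) := by
    have ha : Tendsto (fun N : ℕ => ((1 + 1 / (N : ℝ) : ℝ) : ℂ)) atTop (𝓝 1) := by
      have : Tendsto (fun N : ℕ => (1 + 1 / (N : ℝ) : ℝ)) atTop (𝓝 (1 + 0)) :=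
        tendsto_one_div_atTop_nhds_zero_nat.const_add 1
      rw [add_zero] at this
      have h := (Complex.continuous_ofReal.tendsto 1).comp this
      rwa [Complex.ofReal_one] at h
    have hb := (ha.cpow (tendsto_const_nhds (x := w)) (by simp))
    rw [Complex.one_cpow] at hb
    refine hb.congr' ?_
    filter_upwards [eventually_gt_atTop 0] with N hN
    have hN' : (0 : ℝ) < N := by exact_mod_cast hN
    have : (((N + 1 : ℕ) : ℝ) : ℂ) = ((1 + 1 / (N : ℝ) : ℝ) : ℂ) * ((N : ℝ) : ℂ) := by
      rw [← Complex.ofReal_mul]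
      congr 1
      push_cast
      field_simp
    have h3 := Complex.mul_cpow_ofReal_nonneg (a := 1 + 1 / (N : ℝ)) (b := N)
      (by positivity) (by positivity) w
    rw [← this] at h3
    rw [Complex.ofReal_natCast, Complex.ofReal_natCast] at h3
    rw [h3, mul_div_assoc, div_self, mul_one]
    rw [Complex.cpow_ne_zero_iff]
    left
    exact_mod_cast hN.ne'
  have h2 := ((GammaSeq_tendsto_Gamma w).const_mul w).mul hratio
  rw [mul_one, ← Complex.Gamma_add_one w hw0] at h2
  refine tendsto_nhds_unique h1 (h2.congr' ?_)
  filter_upwards [eventually_gt_atTop 0] with N hN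
  rcases exp_sum_logGammaTerm N hw with h | h
  · exact h.symm
  · omega

/-- The digamma series `ψ(w + 1) = ∑ (log (1 + 1/n) - 1/(n + w))`. -/
theorem logDeriv_Gamma_add_one {w : ℂ} (hw : 0 < w.re) :
    logDeriv Gamma (w + 1) =
      ∑' n : ℕ, (((Real.log (1 + 1 / (n + 1 : ℝ)) : ℝ) : ℂ) - 1 / ((n + 1 : ℂ) + w)) := by
  have h1 := (summable_logGammaTerm_and_hasDerivAt hw).2.cexp
  have h2 : (fun z => Complex.exp (∑' n, logGammaTerm n z)) =ᶠ[𝓝 w]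
      fun z => Complex.Gamma (z + 1) := by
    filter_upwards [(isOpen_lt continuous_const continuous_re).mem_nhds hw] with z hz
    exact exp_tsum_logGammaTerm hz
  have h3 := (h2.hasDerivAt_iff.mp h1).deriv
  rw [deriv_comp_add_const] at h3
  rw [logDeriv_apply, h3, exp_tsum_logGammaTerm hw, mul_div_cancel_left₀]
  refine Complex.Gamma_ne_zero_of_re_pos ?_
  simp
  linarith

/-- The entire function `z (z - 1) Λ(z)`, where `Λ` is the completed zeta function. -/
noncomputable def bigXi (z : ℂ) : ℂ := z * (z - 1) * completedRiemannZeta₀ z + 1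

theorem differentiable_bigXi : Differentiable ℂ bigXi := by
  have := differentiable_completedZeta₀
  unfold bigXi
  fun_prop

theorem bigXi_one_sub (z : ℂ) : bigXi (1 - z) = bigXi z := by
  rw [bigXi, bigXi, completedRiemannZeta₀_one_sub]
  ring

theorem bigXi_eq_mul_zeta {z : ℂ} (hz : 0 < z.re) (hz1 : z ≠ 1) :
    bigXi z = z * (z - 1) * (Gammaℝ z * riemannZeta z) := by
  have hz0 : z ≠ 0 := by
    rintro rfl
    simp at hz
  have hG := Gammaℝ_ne_zero_of_re_pos hz
  have h1 : 1 - z ≠ 0 := sub_ne_zero.mpr hz1.symm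
  rw [riemannZeta_def_of_ne_zero hz0, mul_div_cancel₀ _ hG, completedRiemannZeta_eq, bigXi]
  field_simp
  ring

theorem bigXi_one : bigXi 1 = 1 := by simp [bigXi]

theorem bigXi_conj (z : ℂ) : bigXi ((starRingEnd ℂ) z) = (starRingEnd ℂ) (bigXi z) := by
  have key : ∀ z : ℂ, 0 < z.re → bigXi ((starRingEnd ℂ) z) = (starRingEnd ℂ) (bigXi z) := by
    intro z hz
    by_cases h1 : z = 1
    · rw [h1, map_one, bigXi_one, map_one]
    · have h1' : (starRingEnd ℂ) z ≠ 1 := by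
        intro h
        apply h1
        rw [← Complex.conj_conj z, h, map_one]
      rw [bigXi_eq_mul_zeta hz h1, bigXi_eq_mul_zeta (by simpa using hz) h1', riemannZeta_conj]
      have : Gammaℝ ((starRingEnd ℂ) z) = (starRingEnd ℂ) (Gammaℝ z) := by
        rw [Gammaℝ_def, Gammaℝ_def, map_mul, ← Complex.Gamma_conj]
        congr 1
        · have := Complex.cpow_conj (x := (Real.pi : ℂ)) (n := -z / 2) (by
            rw [Complex.arg_ofReal_of_nonneg Real.pi_pos.le]
            exact Real.pi_pos.ne)
          rw [Complex.conj_ofReal] at this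
          rw [← this]
          simp [map_ofNat]
        · simp [map_ofNat]
      rw [this]
      simp
  rcases lt_or_ge 0 z.re with h | h
  · exact key z h
  · have h2 := key (1 - z) (by simp; linarith)
    rw [map_sub, map_one, bigXi_one_sub, bigXi_one_sub] at h2
    exact h2

theorem bigXi_ne_zero (hRH : RiemannHypothesis) {z : ℂ} (hz : 1 / 2 < z.re) : bigXi z ≠ 0 := by
  by_cases h1 : z = 1
  · rw [h1, bigXi_one]
    exact one_ne_zero
  · have hz0 : 0 < z.re := by linarith
    have hne : z ≠ 0 := by
      rintro rfl
      simp at hz0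
    rw [bigXi_eq_mul_zeta hz0 h1]
    refine mul_ne_zero (mul_ne_zero hne (sub_ne_zero.mpr h1))
      (mul_ne_zero (Gammaℝ_ne_zero_of_re_pos hz0) fun h => ?_)
    have := hRH z h (by
      rintro ⟨n, rfl⟩
      simp at hz0
      have : (0 : ℝ) ≤ n := by positivity
      linarith) h1
    linarith

theorem exists_norm_completedRiemannZeta₀_le (A B : ℝ) :
    ∃ C : ℝ, 0 ≤ C ∧ ∀ z : ℂ, A ≤ z.re → z.re ≤ B → ‖completedRiemannZeta₀ z‖ ≤ C := by
  set P := HurwitzZeta.hurwitzEvenFEPair 0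
  have hconv : ∀ s : ℂ, MellinConvergent P.f_modif s := fun s =>
    ((P.isStrongFEPair_toStrongFEPair).hasMellin s).1
  have hinteg : ∀ σ : ℝ, MeasureTheory.IntegrableOn
      (fun t : ℝ => t ^ (σ - 1) * ‖P.f_modif t‖) (Set.Ioi 0) := by
    intro σ
    have := (hconv σ).norm
    refine MeasureTheory.IntegrableOn.congr_fun this (fun t ht => ?_) measurableSet_Ioi
    simp only [norm_smul]
    rw [Complex.norm_cpow_eq_rpow_re_of_pos ht]
    simp
  set g : ℝ → ℝ := fun t => t ^ (A / 2 - 1) * ‖P.f_modif t‖ + t ^ (B / 2 - 1) * ‖P.f_modif t‖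
  have hg : MeasureTheory.IntegrableOn g (Set.Ioi 0) := (hinteg _).add (hinteg _)
  have hg0 : ∀ t ∈ Set.Ioi (0 : ℝ), 0 ≤ g t := fun t ht => by
    have ht' : (0 : ℝ) < t := ht
    positivity
  refine ⟨∫ t in Set.Ioi (0 : ℝ), g t, MeasureTheory.setIntegral_nonneg measurableSet_Ioi hg0,
    fun z hA hB => ?_⟩
  have e : completedRiemannZeta₀ z = mellin P.f_modif (z / 2) / 2 := rfl
  rw [e, norm_div, mellin]
  have h1 : ‖∫ t in Set.Ioi (0 : ℝ), (t : ℂ) ^ (z / 2 - 1) • P.f_modif t‖ ≤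
      ∫ t in Set.Ioi (0 : ℝ), g t := by
    refine MeasureTheory.norm_integral_le_of_norm_le hg ?_
    filter_upwards [MeasureTheory.ae_restrict_mem measurableSet_Ioi] with t ht
    have ht' : (0 : ℝ) < t := ht
    change _ ≤ t ^ (A / 2 - 1) * ‖P.f_modif t‖ + t ^ (B / 2 - 1) * ‖P.f_modif t‖
    rw [norm_smul, Complex.norm_cpow_eq_rpow_re_of_pos ht', ← add_mul]
    refine mul_le_mul_of_nonneg_right ?_ (norm_nonneg _)
    have hre : (z / 2 - 1).re = z.re / 2 - 1 := by simp
    rw [hre]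
    rcases le_total 1 t with h | h
    · have := Real.rpow_le_rpow_of_exponent_le h (show z.re / 2 - 1 ≤ B / 2 - 1 by linarith)
      have : 0 ≤ t ^ (A / 2 - 1) := by positivity
      linarith
    · have := Real.rpow_le_rpow_of_exponent_ge ht' h (show A / 2 - 1 ≤ z.re / 2 - 1 by linarith)
      have : 0 ≤ t ^ (B / 2 - 1) := by positivity
      linarith
  have : ‖(2 : ℂ)‖ = 2 := by simp
  rw [this]
  have := norm_nonneg (∫ t in Set.Ioi (0 : ℝ), (t : ℂ) ^ (z / 2 - 1) • P.f_modif t)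
  linarith

theorem exists_norm_bigXi_le (A B : ℝ) :
    ∃ C : ℝ, 1 ≤ C ∧ ∀ z : ℂ, A ≤ z.re → z.re ≤ B → ‖bigXi z‖ ≤ C * (1 + |z.im|) ^ 2 := by
  obtain ⟨C, hC0, hC⟩ := exists_norm_completedRiemannZeta₀_le A B
  set D := |A| + |B| + 1
  have hD : 1 ≤ D := by
    have := abs_nonneg A
    have := abs_nonneg B
    linarith
  refine ⟨(D + 1) ^ 2 * C + 1, by nlinarith [sq_nonneg (D + 1)], fun z h1 h2 => ?_⟩
  have hz : ‖z‖ ≤ D + |z.im| := by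
    refine (Complex.norm_le_abs_re_add_abs_im z).trans ?_
    have : |z.re| ≤ D := by
      rw [abs_le]
      have := neg_abs_le A
      have := le_abs_self B
      have := abs_nonneg A
      have := abs_nonneg B
      constructor <;> simp only [D] <;> linarith
    linarith
  have hz1 : ‖z - 1‖ ≤ D + 1 + |z.im| := by
    refine (norm_sub_le _ _).trans ?_
    simp
    linarith
  have hy := abs_nonneg z.im
  rw [bigXi]
  refine (norm_add_le _ _).trans ?_
  rw [norm_mul, norm_mul, norm_one]
  have a1 : ‖z‖ ≤ (D + 1) * (1 + |z.im|) := by nlinarith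
  have a2 : ‖z - 1‖ ≤ (D + 1) * (1 + |z.im|) := by nlinarith
  have a3 : ‖z‖ * ‖z - 1‖ ≤ ((D + 1) * (1 + |z.im|)) * ((D + 1) * (1 + |z.im|)) := by gcongr
  have a4 : ‖z‖ * ‖z - 1‖ * ‖completedRiemannZeta₀ z‖ ≤
      ((D + 1) * (1 + |z.im|)) * ((D + 1) * (1 + |z.im|)) * C := by
    gcongr
    exact hC z h1 h2
  nlinarith

theorem Gammaℝ_mul_self_eq {z : ℂ} (hz : 0 < z.re) :
    z * Gammaℝ z = 2 * (Real.pi : ℂ) ^ (-z / 2) * Gamma (z / 2 + 1) := by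
  have hz0 : z / 2 ≠ 0 := by
    intro h
    have : z = 0 := by simpa using h
    rw [this] at hz
    simp at hz
  rw [Gamma_add_one _ hz0, Gammaℝ_def]
  ring

theorem hasSum_vonMangoldt {z : ℂ} (hz : 1 < z.re) :
    Summable (fun n : ℕ => LSeries.term (fun n => (ArithmeticFunction.vonMangoldt n : ℂ)) z n) :=
  ArithmeticFunction.LSeriesSummable_vonMangoldt hz

theorem logDeriv_bigXi {z : ℂ} (hz : 1 < z.re) :
    logDeriv bigXi z = 1 / (z - 1) - (Real.log Real.pi / 2 : ℝ) +
      (∑' n : ℕ, (((Real.log (1 + 1 / (n + 1 : ℝ)) / 2 : ℝ) : ℂ) - 1 / (2 * (n + 1 : ℂ) + z))) -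
      LSeries (fun n => (ArithmeticFunction.vonMangoldt n : ℂ)) z := by
  have hz1 : z ≠ 1 := by
    rintro rfl
    simp at hz
  have hev : bigXi =ᶠ[𝓝 z] fun w => (2 * (w - 1)) * ((Real.pi : ℂ) ^ (-w / 2) *
      (Gamma (w / 2 + 1) * riemannZeta w)) := by
    filter_upwards [(isOpen_lt continuous_const continuous_re).mem_nhds hz] with w hw
    have hw' : (1 : ℝ) < w.re := hw
    rw [bigXi_eq_mul_zeta (by linarith) (by rintro rfl; simp at hw')]
    have := Gammaℝ_mul_self_eq (z := w) (by linarith)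
    linear_combination ((w - 1) * riemannZeta w) * this
  have hre : 0 < (z / 2).re := by
    simp
    linarith
  have hpi : (Real.pi : ℂ) ≠ 0 := by exact_mod_cast Real.pi_ne_zero
  have hG : Gamma (z / 2 + 1) ≠ 0 := Gamma_ne_zero_of_re_pos (by simp; linarith)
  have hζ : riemannZeta z ≠ 0 := riemannZeta_ne_zero_of_one_lt_re hz
  have hGd : DifferentiableAt ℂ Gamma (z / 2 + 1) := by
    refine differentiableAt_Gamma _ fun m h => ?_
    have := congrArg Complex.re h
    simp at this
    have h0 : (0 : ℝ) ≤ m := by positivity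
    linarith
  have hGd' : DifferentiableAt ℂ (fun w => Gamma (w / 2 + 1)) z :=
    DifferentiableAt.comp (f := fun w : ℂ => w / 2 + 1) z hGd (by fun_prop)
  have hζd := differentiableAt_riemannZeta hz1
  have hpd : HasDerivAt (fun w : ℂ => (Real.pi : ℂ) ^ (-w / 2))
      ((Real.pi : ℂ) ^ (-z / 2) * Complex.log Real.pi * (-1 / 2)) z :=
    (((hasDerivAt_id z).neg).div_const 2).const_cpow (Or.inl hpi)
  have hp0 : (Real.pi : ℂ) ^ (-z / 2) ≠ 0 := by
    rw [Complex.cpow_ne_zero_iff]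
    exact Or.inl hpi
  have e0 : logDeriv bigXi z = logDeriv (fun w => (2 * (w - 1)) * ((Real.pi : ℂ) ^ (-w / 2) *
      (Gamma (w / 2 + 1) * riemannZeta w))) z := by
    rw [logDeriv_apply, logDeriv_apply, hev.deriv_eq, hev.eq_of_nhds]
  have hl : HasDerivAt (fun w : ℂ => 2 * (w - 1)) 2 z := by
    simpa using ((hasDerivAt_id z).sub_const 1).const_mul 2
  have hz1' : z - 1 ≠ 0 := sub_ne_zero.mpr hz1
  rw [e0, logDeriv_mul (f := fun w : ℂ => 2 * (w - 1)) (g := fun w : ℂ => (Real.pi : ℂ) ^ (-w / 2) *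
      (Gamma (w / 2 + 1) * riemannZeta w)) z (by simpa using hz1')
      (mul_ne_zero hp0 (mul_ne_zero hG hζ)) hl.differentiableAt
      (hpd.differentiableAt.mul (hGd'.mul hζd)),
    logDeriv_mul (f := fun w : ℂ => (Real.pi : ℂ) ^ (-w / 2))
      (g := fun w : ℂ => Gamma (w / 2 + 1) * riemannZeta w) z hp0 (mul_ne_zero hG hζ)
      hpd.differentiableAt (hGd'.mul hζd),
    logDeriv_mul (f := fun w : ℂ => Gamma (w / 2 + 1)) z hG hζ hGd' hζd]
  have e1 : logDeriv (fun w : ℂ => 2 * (w - 1)) z = 1 / (z - 1) := by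
    rw [logDeriv_apply, hl.deriv]
    field_simp
  have e2 : logDeriv (fun w : ℂ => (Real.pi : ℂ) ^ (-w / 2)) z = -(Real.log Real.pi / 2 : ℝ) := by
    rw [logDeriv_apply, hpd.deriv, mul_assoc, mul_div_cancel_left₀ _ hp0, Complex.ofReal_div,
      Complex.ofReal_log Real.pi_pos.le]
    push_cast
    ring
  have e3 : logDeriv (fun w : ℂ => Gamma (w / 2 + 1)) z =
      ∑' n : ℕ, (((Real.log (1 + 1 / (n + 1 : ℝ)) / 2 : ℝ) : ℂ) - 1 / (2 * (n + 1 : ℂ) + z)) := by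
    have hd : HasDerivAt (fun w : ℂ => w / 2 + 1) (1 / 2) z := by
      simpa using ((hasDerivAt_id z).div_const 2).add_const 1
    have h := hGd.hasDerivAt.comp (h := fun w : ℂ => w / 2 + 1) z hd
    have h' : deriv (fun w : ℂ => Gamma (w / 2 + 1)) z = deriv Gamma (z / 2 + 1) * (1 / 2) :=
      h.deriv
    rw [logDeriv_apply, h', mul_comm, mul_div_assoc, ← logDeriv_apply,
      logDeriv_Gamma_add_one hre, ← tsum_mul_left]
    refine tsum_congr fun n => ?_
    have hn : ((n + 1 : ℂ) + z / 2) ≠ 0 := by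
      intro h
      have := congrArg Complex.re h
      simp at this
      have h0 : (0 : ℝ) ≤ n := by positivity
      linarith
    have hn' : (2 * (n + 1 : ℂ) + z) ≠ 0 := by
      intro h
      apply hn
      linear_combination h / 2
    push_cast
    field_simp
  have e4 : logDeriv riemannZeta z =
      -LSeries (fun n => (ArithmeticFunction.vonMangoldt n : ℂ)) z := by
    rw [ArithmeticFunction.LSeries_vonMangoldt_eq_deriv_riemannZeta_div hz, logDeriv_apply]
    ring
  rw [e1, e2, e3, e4]
  ring

theorem norm_log_sub_inv_le_sqrt (n : ℕ) {w : ℂ} (hw : 0 ≤ w.re) :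
    ‖((Real.log (1 + 1 / (n + 1 : ℝ)) : ℝ) : ℂ) - 1 / ((n + 1 : ℂ) + w)‖
      ≤ (1 + √‖w‖) * (1 / (n + 1 : ℝ) ^ (3 / 2 : ℝ)) := by
  have hn : (0 : ℝ) < n + 1 := by positivity
  have hn1 : (1 : ℝ) ≤ n + 1 := by
    have : (0 : ℝ) ≤ n := by positivity
    linarith
  have hden : (n + 1 : ℝ) ≤ ‖(n + 1 : ℂ) + w‖ := by
    have := Complex.re_le_norm ((n + 1 : ℂ) + w)
    simp at this
    linarith
  have hden2 : ‖w‖ ≤ ‖(n + 1 : ℂ) + w‖ := by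
    rw [← Real.sqrt_sq (norm_nonneg w), ← Real.sqrt_sq (norm_nonneg ((n + 1 : ℂ) + w))]
    refine Real.sqrt_le_sqrt ?_
    rw [Complex.sq_norm, Complex.sq_norm, Complex.normSq_apply, Complex.normSq_apply]
    simp
    nlinarith
  have hne : (n + 1 : ℂ) + w ≠ 0 := by
    rw [← norm_pos_iff]
    linarith
  have hne' : (n + 1 : ℂ) ≠ 0 := by exact_mod_cast hn.ne'
  have e : ((Real.log (1 + 1 / (n + 1 : ℝ)) : ℝ) : ℂ) - 1 / ((n + 1 : ℂ) + w)
      = ((Real.log (1 + 1 / (n + 1 : ℝ)) - 1 / (n + 1 : ℝ) : ℝ) : ℂ) +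
        w / ((n + 1 : ℂ) * ((n + 1 : ℂ) + w)) := by
    push_cast
    field_simp
    ring
  have hp : (n + 1 : ℝ) ^ (3 / 2 : ℝ) = (n + 1 : ℝ) * √(n + 1 : ℝ) := by
    rw [Real.sqrt_eq_rpow, show (3 / 2 : ℝ) = 1 + 1 / 2 by norm_num, Real.rpow_add hn,
      Real.rpow_one]
  rw [e, hp, add_mul (1 : ℝ)]
  have hs : 0 < √(n + 1 : ℝ) := Real.sqrt_pos.mpr hn
  have hss := Real.mul_self_sqrt hn.le
  refine (norm_add_le _ _).trans (add_le_add ?_ ?_)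
  · rw [Complex.norm_real, one_mul]
    refine (abs_log_one_add_inv_sub_inv_le n).trans ?_
    rw [pow_two]
    have : √(n + 1 : ℝ) ≤ n + 1 := by
      have h1 : 1 ≤ √(n + 1 : ℝ) := Real.one_le_sqrt.mpr hn1
      nlinarith
    gcongr
  · rw [norm_div, norm_mul]
    have h1 : ‖(n + 1 : ℂ)‖ = n + 1 := by
      have := Complex.norm_natCast (n + 1)
      push_cast at this
      exact this
    rw [h1, mul_one_div, div_le_div_iff₀ (by positivity) (by positivity)]
    set D := ‖(n + 1 : ℂ) + w‖
    have hD : 0 < D := by linarith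
    have h2 : √‖w‖ * √(n + 1 : ℝ) ≤ D := by
      rw [← Real.sqrt_mul (norm_nonneg w)]
      refine Real.sqrt_le_iff.mpr ⟨hD.le, ?_⟩
      rw [pow_two]
      gcongr
    have h3 := Real.mul_self_sqrt (norm_nonneg w)
    have h4 : ‖w‖ * ((n + 1) * √(n + 1 : ℝ)) = √‖w‖ * ((n + 1) * (√‖w‖ * √(n + 1 : ℝ))) := by
      linear_combination (-((n + 1) * √(n + 1 : ℝ))) * h3
    rw [h4]
    gcongr

theorem summable_one_div_succ_rpow : Summable fun n : ℕ => 1 / (n + 1 : ℝ) ^ (3 / 2 : ℝ) := by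
  have h := (summable_nat_add_iff 1).mpr
    (Real.summable_one_div_nat_rpow.mpr (show (1 : ℝ) < 3 / 2 by norm_num))
  simpa using h

/-- Terms of the archimedean series of the logarithmic derivative of `bigXi`. -/
noncomputable def archTerm (z : ℂ) (n : ℕ) : ℂ :=
  ((Real.log (1 + 1 / (n + 1 : ℝ)) / 2 : ℝ) : ℂ) - 1 / (2 * (n + 1 : ℂ) + z)

theorem norm_archTerm_le {z : ℂ} (hz : 0 ≤ z.re) (n : ℕ) :
    ‖archTerm z n‖ ≤ (1 + √‖z‖) * (1 / (n + 1 : ℝ) ^ (3 / 2 : ℝ)) := by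
  have h := norm_log_sub_inv_le_sqrt n (w := z / 2) (by simp; linarith)
  have hne : (n + 1 : ℂ) + z / 2 ≠ 0 := by
    intro h
    have := congrArg Complex.re h
    simp at this
    have h0 : (0 : ℝ) ≤ n := by positivity
    linarith
  have hne2 : 2 * (n + 1 : ℂ) + z ≠ 0 := by
    intro h
    apply hne
    linear_combination h / 2
  have e : archTerm z n = (1 / 2) *
      (((Real.log (1 + 1 / (n + 1 : ℝ)) : ℝ) : ℂ) - 1 / ((n + 1 : ℂ) + z / 2)) := by
    rw [archTerm]
    push_cast
    field_simp
  rw [e, norm_mul]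
  have h2 : √‖z / 2‖ ≤ √‖z‖ := by
    refine Real.sqrt_le_sqrt ?_
    rw [norm_div]
    simp
  have h3 : ‖(1 / 2 : ℂ)‖ = 1 / 2 := by simp
  rw [h3]
  have h4 : (1 + √‖z / 2‖) * (1 / (n + 1 : ℝ) ^ (3 / 2 : ℝ)) ≤
      (1 + √‖z‖) * (1 / (n + 1 : ℝ) ^ (3 / 2 : ℝ)) := by gcongr
  have := norm_nonneg (((Real.log (1 + 1 / (n + 1 : ℝ)) : ℝ) : ℂ) - 1 / ((n + 1 : ℂ) + z / 2))
  linarith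

theorem summable_archTerm {z : ℂ} (hz : 0 ≤ z.re) : Summable (archTerm z) :=
  Summable.of_norm_bounded (summable_one_div_succ_rpow.mul_left _) (norm_archTerm_le hz)

theorem logDeriv_bigXi' {z : ℂ} (hz : 1 < z.re) :
    logDeriv bigXi z = 1 / (z - 1) - (Real.log Real.pi / 2 : ℝ) + (∑' n : ℕ, archTerm z n) -
      LSeries (fun n => (ArithmeticFunction.vonMangoldt n : ℂ)) z :=
  logDeriv_bigXi hz

theorem exists_norm_LSeries_vonMangoldt_le : ∃ C : ℝ, 0 ≤ C ∧ ∀ z : ℂ, 2 ≤ z.re →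
    ‖LSeries (fun n => (ArithmeticFunction.vonMangoldt n : ℂ)) z‖ ≤ C := by
  have hs := (hasSum_vonMangoldt (z := 2) (by simp)).norm
  refine ⟨∑' n, ‖LSeries.term (fun n => (ArithmeticFunction.vonMangoldt n : ℂ)) 2 n‖,
    tsum_nonneg fun n => norm_nonneg _, fun z hz => ?_⟩
  exact tsum_of_norm_bounded hs.hasSum fun n =>
    LSeries.norm_term_le_of_re_le_re _ (by simpa using hz) n

theorem exists_norm_logDeriv_bigXi_le : ∃ C : ℝ, 0 ≤ C ∧ ∀ z : ℂ, 2 ≤ z.re →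
    ‖logDeriv bigXi z‖ ≤ C * (1 + √‖z‖) := by
  obtain ⟨K, hK0, hK⟩ := exists_norm_LSeries_vonMangoldt_le
  set S := ∑' n : ℕ, 1 / (n + 1 : ℝ) ^ (3 / 2 : ℝ)
  have hS : 0 ≤ S := tsum_nonneg fun n => by positivity
  refine ⟨1 + |Real.log Real.pi / 2| + S + K, by positivity, fun z hz => ?_⟩
  rw [logDeriv_bigXi' (by linarith)]
  have h1 : ‖1 / (z - 1)‖ ≤ 1 := by
    rw [norm_div, norm_one, div_le_one₀]
    · have := Complex.re_le_norm (z - 1)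
      simp at this
      linarith
    · rw [norm_pos_iff]
      intro h
      have := congrArg Complex.re h
      simp at this
      linarith
  have h2 : ‖∑' n : ℕ, archTerm z n‖ ≤ (1 + √‖z‖) * S :=
    tsum_of_norm_bounded (summable_one_div_succ_rpow.hasSum.mul_left _)
      (norm_archTerm_le (by linarith))
  have h3 := hK z hz
  have h4 : ‖((Real.log Real.pi / 2 : ℝ) : ℂ)‖ = |Real.log Real.pi / 2| := Complex.norm_real _
  have h5 := Real.sqrt_nonneg ‖z‖
  have h6 := abs_nonneg (Real.log Real.pi / 2)
  calc _ ≤ ‖1 / (z - 1)‖ + ‖((Real.log Real.pi / 2 : ℝ) : ℂ)‖ + ‖∑' n : ℕ, archTerm z n‖ +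
        ‖LSeries (fun n => (ArithmeticFunction.vonMangoldt n : ℂ)) z‖ :=
        (norm_sub_le _ _).trans (add_le_add_left ((norm_add_le _ _).trans
          (add_le_add_left (norm_sub_le _ _) _)) _)
    _ ≤ 1 + |Real.log Real.pi / 2| + (1 + √‖z‖) * S + K := by linarith
    _ ≤ _ := by nlinarith [mul_nonneg h6 h5, mul_nonneg hK0 h5]

theorem log_sub_inv_nonneg (n : ℕ) {z : ℂ} (hz : 2 ≤ z.re) : 0 ≤ (archTerm z n).re := by
  have hn : (0 : ℝ) < n + 1 := by positivity
  have h2 : 1 - (1 + 1 / (n + 1 : ℝ))⁻¹ ≤ Real.log (1 + 1 / (n + 1 : ℝ)) :=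
    Real.one_sub_inv_le_log_of_pos (by positivity)
  have h3 : 1 - (1 + 1 / (n + 1 : ℝ))⁻¹ = 1 / (n + 2) := by
    field_simp
    ring
  have h4 : (1 / (2 * (n + 1 : ℂ) + z)).re ≤ 1 / (2 * (n + 2)) := by
    refine (Complex.re_le_norm _).trans ?_
    rw [norm_div, norm_one]
    have := Complex.re_le_norm (2 * (n + 1 : ℂ) + z)
    simp at this
    gcongr
    linarith
  rw [archTerm, Complex.sub_re, Complex.ofReal_re]
  have : 1 / (2 * (n + 2 : ℝ)) = 1 / (n + 2) / 2 := by
    field_simp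
  linarith

theorem exists_re_logDeriv_bigXi_nonneg :
    ∃ B : ℝ, 2 ≤ B ∧ ∀ z : ℂ, B ≤ z.re → 0 ≤ (logDeriv bigXi z).re := by
  obtain ⟨K, hK0, hK⟩ := exists_norm_LSeries_vonMangoldt_le
  set L : ℝ := Real.log Real.pi / 2 + K + 1
  obtain ⟨N, hN⟩ := exists_nat_ge (Real.exp (2 * L))
  refine ⟨N + 2, by linarith [Nat.cast_nonneg (α := ℝ) N], fun z hz => ?_⟩
  have hz2 : 2 ≤ z.re := by linarith [Nat.cast_nonneg (α := ℝ) N]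
  rw [logDeriv_bigXi' (by linarith), Complex.sub_re, Complex.add_re, Complex.sub_re,
    Complex.ofReal_re]
  have h1 : 0 ≤ (1 / (z - 1)).re := by
    rw [one_div, Complex.inv_re]
    refine div_nonneg ?_ (Complex.normSq_nonneg _)
    simp
    linarith
  have h2 := (Complex.re_le_norm _).trans (hK z hz2)
  have hs := summable_archTerm (z := z) (by linarith)
  have h3 : ∑ n ∈ Finset.range N, (archTerm z n).re ≤ (∑' n : ℕ, archTerm z n).re := by
    rw [Complex.re_tsum hs]
    exact Summable.sum_le_tsum _ (fun n _ => log_sub_inv_nonneg n hz2)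
      (Complex.hasSum_re hs.hasSum).summable
  have h4 : ∀ n : ℕ, (Real.log (n + 2) - Real.log (n + 1)) / 2 - 1 / (N + 2) ≤
      (archTerm z n).re := by
    intro n
    have hn : (0 : ℝ) < n + 1 := by positivity
    have h5 : (1 / (2 * (n + 1 : ℂ) + z)).re ≤ 1 / (N + 2) := by
      refine (Complex.re_le_norm _).trans ?_
      rw [norm_div, norm_one]
      have := Complex.re_le_norm (2 * (n + 1 : ℂ) + z)
      simp at this
      gcongr
      linarith
    have h6 : Real.log (1 + 1 / (n + 1 : ℝ)) = Real.log (n + 2) - Real.log (n + 1) := by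
      rw [← Real.log_div (by positivity) (by positivity)]
      congr 1
      field_simp
      ring
    rw [archTerm, Complex.sub_re, Complex.ofReal_re, h6]
    linarith
  have h5 : ∀ M : ℕ, ∑ n ∈ Finset.range M, ((Real.log (n + 2) - Real.log (n + 1)) / 2 -
      1 / (N + 2 : ℝ)) = Real.log (M + 1) / 2 - M / (N + 2) := by
    intro M
    induction M with
    | zero => simp
    | succ M ih =>
      rw [Finset.sum_range_succ, ih]
      push_cast
      rw [show (M : ℝ) + 1 + 1 = M + 2 by ring]
      ring
  have h6 := Finset.sum_le_sum fun n (_ : n ∈ Finset.range N) => h4 n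
  rw [h5] at h6
  have h7 : 2 * L ≤ Real.log (N + 1) := by
    rw [Real.le_log_iff_exp_le (by positivity)]
    linarith
  have h8 : (N : ℝ) / (N + 2) ≤ 1 := by
    rw [div_le_one₀ (by positivity)]
    linarith
  simp only [L] at h7
  linarith

theorem exists_norm_inv_bigXi_vertical_le (hRH : RiemannHypothesis) {m : ℝ} (hm : 2 ≤ m) :
    ∃ C : ℝ, 0 ≤ C ∧ ∀ t : ℝ, ‖(bigXi (m + t * I))⁻¹‖ ≤ Real.exp (C * (1 + |t|) ^ 2) := by
  obtain ⟨K, hK0, hK⟩ := exists_norm_logDeriv_bigXi_le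
  have hne : ∀ t : ℝ, bigXi (m + t * I) ≠ 0 := fun t => bigXi_ne_zero hRH (by simp; linarith)
  set D := ‖(bigXi (m + (0 : ℝ) * I))⁻¹‖
  have hD : 0 ≤ D := norm_nonneg _
  have key : ∀ T : ℝ, 0 ≤ T → ‖(bigXi (m + T * I))⁻¹‖ ≤
      D * Real.exp (K * (2 + m + T) * T) := by
    intro T hT
    have hder : ∀ x : ℝ, HasDerivAt (fun t : ℝ => (bigXi (m + t * I))⁻¹)
        (-(logDeriv bigXi (m + x * I) * I) * (bigXi (m + x * I))⁻¹) x := by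
      intro x
      have h1 : HasDerivAt (fun t : ℂ => (m : ℂ) + t * I) I (x : ℂ) := by
        simpa using ((hasDerivAt_id (x : ℂ)).mul_const I).const_add (m : ℂ)
      have h2 := ((differentiable_bigXi _).hasDerivAt.comp (x : ℂ) h1).fun_inv (hne x)
      refine h2.comp_ofReal.congr_deriv ?_
      have := hne x
      simp only [Function.comp_apply]
      rw [logDeriv_apply]
      field_simp
    have h := norm_le_gronwallBound_of_norm_deriv_right_le (ε := 0) (δ := D)
      (K := K * (2 + m + T)) (a := 0) (b := T)
      (f := fun t : ℝ => (bigXi (m + t * I))⁻¹)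
      (f' := fun x : ℝ => -(logDeriv bigXi (m + x * I) * I) * (bigXi (m + x * I))⁻¹)
      (fun x _ => (hder x).continuousAt.continuousWithinAt)
      (fun x _ => (hder x).hasDerivWithinAt) le_rfl (fun x hx => ?_) T ⟨hT, le_rfl⟩
    · rw [gronwallBound_ε0, sub_zero] at h
      exact h
    · rw [norm_mul, norm_neg, norm_mul, norm_I, mul_one, add_zero]
      refine mul_le_mul_of_nonneg_right ?_ (norm_nonneg _)
      refine (hK _ (by simpa using hm)).trans ?_
      refine mul_le_mul_of_nonneg_left ?_ hK0
      have h1 : ‖(m + x * I : ℂ)‖ ≤ m + T := by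
        refine (norm_add_le _ _).trans ?_
        rw [norm_mul, norm_I, Complex.norm_real, Complex.norm_real, Real.norm_of_nonneg hx.1,
          Real.norm_of_nonneg (by linarith)]
        linarith [hx.2.le]
      have h2 : √‖(m + x * I : ℂ)‖ ≤ 1 + ‖(m + x * I : ℂ)‖ := by
        rw [Real.sqrt_le_left (by positivity)]
        nlinarith [norm_nonneg (m + x * I : ℂ)]
      linarith
  refine ⟨D + K * (2 + m), by positivity, fun t => ?_⟩
  have h1 : ‖(bigXi (m + t * I))⁻¹‖ = ‖(bigXi (m + |t| * I))⁻¹‖ := by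
    rcases le_total 0 t with h | h
    · rw [abs_of_nonneg h]
    · rw [abs_of_nonpos h]
      have : ((m : ℂ) + (-t : ℝ) * I) = (starRingEnd ℂ) (m + t * I) := by
        simp
      rw [this, bigXi_conj, ← map_inv₀, Complex.norm_conj]
  rw [h1]
  refine (key _ (abs_nonneg t)).trans ?_
  have h2 : D ≤ Real.exp D := by linarith [Real.add_one_le_exp D]
  have ht := abs_nonneg t
  calc D * Real.exp (K * (2 + m + |t|) * |t|)
      ≤ Real.exp D * Real.exp (K * (2 + m + |t|) * |t|) := by gcongr
    _ = Real.exp (D + K * (2 + m + |t|) * |t|) := (Real.exp_add _ _).symm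
    _ ≤ _ := by
      refine Real.exp_le_exp.mpr ?_
      have h3 : D ≤ D * (1 + |t|) ^ 2 := by nlinarith [mul_nonneg hD ht]
      have h4 : (2 + m + |t|) * |t| ≤ (2 + m) * (1 + |t|) ^ 2 := by
        nlinarith [mul_nonneg (show 0 ≤ 1 + m by linarith) (sq_nonneg |t|),
          mul_nonneg (show 0 ≤ 2 + m by linarith) ht]
      have h5 := mul_le_mul_of_nonneg_left h4 hK0
      linarith

theorem exists_norm_inv_bigXi_le (hRH : RiemannHypothesis) {b m : ℝ} (hb : 0 < b) (hm : 2 ≤ m) :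
    ∃ C : ℝ, 0 ≤ C ∧ ∀ z : ℂ, 1 / 2 + b ≤ z.re → z.re ≤ m →
      ‖(bigXi z)⁻¹‖ ≤ Real.exp (C * (1 + |z.im|) ^ 2) := by
  obtain ⟨C₁, hC₁0, hC₁⟩ := exists_norm_inv_bigXi_vertical_le hRH hm
  obtain ⟨C₀, hC₀1, hC₀⟩ := exists_norm_bigXi_le 0 (2 * m)
  set R := m - 1 / 2
  have hR : 0 < R := by simp only [R]; linarith
  set C₂ := C₀ * (1 + R) ^ 2 + C₁
  have hC₂ : 0 < C₂ := by positivity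
  refine ⟨C₁ + 2 * C₂ * R / b, by positivity, fun z hz1 hz2 => ?_⟩
  set t := z.im
  have ht := abs_nonneg t
  set c : ℂ := m + t * I
  have hcre : c.re = m := by simp [c]
  have hcim : c.im = t := by simp [c]
  have hball : ∀ w ∈ Metric.ball c R, 1 / 2 < w.re ∧ w.re ≤ 2 * m ∧ |w.im| ≤ |t| + R := by
    intro w hw
    rw [Metric.mem_ball, dist_eq_norm] at hw
    have h1 := (Complex.abs_re_le_norm (w - c)).trans_lt hw
    have h2 := (Complex.abs_im_le_norm (w - c)).trans_lt hw
    rw [Complex.sub_re, hcre, abs_lt] at h1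
    rw [Complex.sub_im, hcim] at h2
    have h3 : |w.im| ≤ |w.im - t| + |t| := by simpa using abs_add_le (w.im - t) t
    refine ⟨by simp only [R] at h1; linarith [h1.1], by simp only [R] at h1; linarith [h1.2],
      by linarith⟩
  have hne : ∀ w ∈ Metric.ball c R, bigXi w ≠ 0 := fun w hw => bigXi_ne_zero hRH (hball w hw).1
  have hFd : DifferentiableOn ℂ (logDeriv bigXi) (Metric.ball c R) := by
    intro w hw
    have h1 : DifferentiableAt ℂ (deriv bigXi) w :=
      (differentiable_bigXi.analyticAt w).deriv.differentiableAt
    exact (h1.div (differentiable_bigXi w) (hne w hw)).differentiableWithinAt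
  obtain ⟨L, hLc, hL⟩ := hFd.isExactOn_ball.with_val_at c 0
  have hcmem : c ∈ Metric.ball c R := Metric.mem_ball_self hR
  have hconst : ∀ w ∈ Metric.ball c R, bigXi w * Complex.exp (-L w) = bigXi c := by
    intro w hw
    have hder : ∀ w ∈ Metric.ball c R,
        HasDerivAt (fun w => bigXi w * Complex.exp (-L w)) 0 w := by
      intro w hw
      refine ((differentiable_bigXi w).hasDerivAt.mul (hL w hw).fun_neg.cexp).congr_deriv ?_
      have := hne w hw
      rw [logDeriv_apply]
      field_simp
      ring
    have := Metric.isOpen_ball.is_const_of_deriv_eq_zero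
      (convex_ball c R).isPreconnected
      (fun w hw => (hder w hw).differentiableAt.differentiableWithinAt)
      (fun w hw => (hder w hw).deriv) hw hcmem
    rw [this, hLc]
    simp
  set M := C₂ * (1 + |t|) ^ 2
  have hM : 0 < M := by positivity
  have hReL : ∀ w ∈ Metric.ball c R, (L w).re ≤ M := by
    intro w hw
    obtain ⟨h1, h2, h3⟩ := hball w hw
    have e : Complex.exp (L w) = bigXi w * (bigXi c)⁻¹ := by
      have := hne c hcmem
      rw [← hconst w hw, Complex.exp_neg]
      have h4 := Complex.exp_ne_zero (L w)
      have h5 := hne w hw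
      field_simp
    have e2 := congrArg norm e
    rw [Complex.norm_exp, norm_mul] at e2
    rw [← Real.exp_le_exp, e2]
    have h4 := hC₀ w (by linarith) h2
    have h5 : ‖bigXi w‖ ≤ Real.exp (C₀ * (1 + R) ^ 2 * (1 + |t|) ^ 2) := by
      have h6 : C₀ * (1 + |w.im|) ^ 2 ≤ C₀ * (1 + R) ^ 2 * (1 + |t|) ^ 2 := by
        rw [mul_assoc, ← mul_pow]
        refine mul_le_mul_of_nonneg_left ?_ (by linarith)
        refine pow_le_pow_left₀ (by positivity) ?_ 2
        nlinarith [mul_nonneg hR.le ht]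
      linarith [Real.add_one_le_exp (C₀ * (1 + R) ^ 2 * (1 + |t|) ^ 2)]
    calc _ ≤ Real.exp (C₀ * (1 + R) ^ 2 * (1 + |t|) ^ 2) * Real.exp (C₁ * (1 + |t|) ^ 2) := by
          gcongr
          exact hC₁ t
      _ = Real.exp M := by
          rw [← Real.exp_add]
          congr 1
          simp only [M, C₂]
          ring
  have hzc : ‖z - c‖ = m - z.re := by
    have : z - c = ((z.re - m : ℝ) : ℂ) := by
      apply Complex.ext <;> simp [c, t]
    rw [this, Complex.norm_real, Real.norm_eq_abs, abs_of_nonpos (by linarith)]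
    ring
  have hzmem : z - c ∈ Metric.ball (0 : ℂ) R := by
    rw [mem_ball_zero_iff, hzc]
    simp only [R]
    linarith
  have hshift : ∀ w ∈ Metric.ball (0 : ℂ) R, c + w ∈ Metric.ball c R := by
    intro w hw
    rw [mem_ball_zero_iff] at hw
    rw [Metric.mem_ball, dist_eq_norm]
    simpa using hw
  have hBC := Complex.borelCaratheodory (f := fun w => L (c + w)) hM
    (fun w hw => ((hL _ (hshift w hw)).comp_const_add c w).differentiableAt.differentiableWithinAt)
    (fun w hw => hReL _ (hshift w hw)) hR hzmem
  simp only [add_sub_cancel, add_zero, hLc, norm_zero, zero_mul, zero_div] at hBC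
  have hLz : ‖L z‖ ≤ 2 * M * R / b := by
    refine hBC.trans ?_
    rw [hzc]
    have : m - z.re ≤ R := by simp only [R]; linarith
    have : b ≤ R - (m - z.re) := by simp only [R]; linarith
    have : 0 ≤ m - z.re := by linarith
    gcongr
  have hz' := hshift _ hzmem
  rw [add_sub_cancel] at hz'
  have e : (bigXi z)⁻¹ = (bigXi c)⁻¹ * Complex.exp (-L z) := by
    rw [← hconst z hz', Complex.exp_neg]
    have h4 := Complex.exp_ne_zero (L z)
    have h5 := hne z hz'
    field_simp
  rw [e, norm_mul, Complex.norm_exp]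
  have h6 : (-L z).re ≤ 2 * M * R / b := by
    refine (Complex.re_le_norm _).trans ?_
    rwa [norm_neg]
  calc _ ≤ Real.exp (C₁ * (1 + |t|) ^ 2) * Real.exp (2 * M * R / b) := by
        gcongr
        exact hC₁ t
    _ = _ := by
        rw [← Real.exp_add]
        congr 1
        simp only [M]
        ring

theorem norm_bigXi_le_of_re_nonneg {B x y t : ℝ} (hB : ∀ z : ℂ, B ≤ z.re →
    0 ≤ (logDeriv bigXi z).re) (hx : B ≤ x) (hxy : x ≤ y) :
    ‖bigXi (x + t * I)‖ ≤ ‖bigXi (y + t * I)‖ := by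
  have hder : ∀ s : ℝ, HasDerivAt (fun s : ℝ => ‖bigXi (s + t * I)‖ ^ 2)
      (2 * inner ℝ (bigXi (s + t * I)) (deriv bigXi (s + t * I))) s := by
    intro s
    have h1 : HasDerivAt (fun s : ℂ => s + t * I) 1 (s : ℂ) := (hasDerivAt_id _).add_const _
    have h2 := ((differentiable_bigXi _).hasDerivAt.comp (s : ℂ) h1).comp_ofReal
    rw [mul_one] at h2
    exact h2.norm_sq
  have hmono : MonotoneOn (fun s : ℝ => ‖bigXi (s + t * I)‖ ^ 2) (Set.Ici B) := by
    refine monotoneOn_of_deriv_nonneg (convex_Ici B)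
      (fun s _ => (hder s).continuousAt.continuousWithinAt)
      (fun s _ => (hder s).differentiableAt.differentiableWithinAt) fun s hs => ?_
    rw [interior_Ici] at hs
    rw [(hder s).deriv]
    refine mul_nonneg zero_le_two ?_
    have hs' : B < s := hs
    have h := hB (s + t * I) (by simp; linarith)
    rw [Complex.inner]
    by_cases h0 : bigXi (s + t * I) = 0
    · simp [h0]
    · have e : deriv bigXi (s + t * I) * (starRingEnd ℂ) (bigXi (s + t * I)) =
          logDeriv bigXi (s + t * I) * (Complex.normSq (bigXi (s + t * I)) : ℝ) := by
        rw [← Complex.mul_conj, logDeriv_apply]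
        field_simp
      rw [e, Complex.re_mul_ofReal]
      exact mul_nonneg h (Complex.normSq_nonneg _)
  have := hmono (Set.mem_Ici.mpr hx) (Set.mem_Ici.mpr (hx.trans hxy)) hxy
  exact (pow_le_pow_iff_left₀ (norm_nonneg _) (norm_nonneg _) two_ne_zero).mp this

theorem norm_bigXi_div_le_one (hRH : RiemannHypothesis) {B b : ℝ} (hB2 : 2 ≤ B)
    (hB : ∀ z : ℂ, B ≤ z.re → 0 ≤ (logDeriv bigXi z).re) (hb : 0 < b) (hb1 : b ≤ 1) {z : ℂ}
    (hz : 1 / 2 ≤ z.re) (hzB : z.re ≤ B + 1) :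
    ‖bigXi (z - b) * (bigXi (z + b))⁻¹‖ ≤ 1 := by
  have hne : ∀ w : ℂ, 1 / 2 ≤ w.re → bigXi (w + b) ≠ 0 := fun w hw =>
    bigXi_ne_zero hRH (by simp; linarith)
  obtain ⟨C₀, hC₀1, hC₀⟩ := exists_norm_bigXi_le (-1) (B + 1)
  obtain ⟨C₁, hC₁0, hC₁⟩ := exists_norm_inv_bigXi_le hRH hb (show 2 ≤ B + 2 by linarith)
  refine PhragmenLindelof.vertical_strip (a := 1 / 2) (b := B + 1)
    (f := fun z => bigXi (z - b) * (bigXi (z + b))⁻¹) ?_ ?_ ?_ ?_ hz hzB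
  · refine DifferentiableOn.diffContOnCl fun w hw => ?_
    have hw' : 1 / 2 ≤ w.re := by
      have h2 : closure (re ⁻¹' Set.Ioo (1 / 2) (B + 1)) ⊆ {w : ℂ | 1 / 2 ≤ w.re} :=
        closure_minimal (fun w hw => hw.1.le) (isClosed_le continuous_const continuous_re)
      exact h2 hw
    have h1 : DifferentiableAt ℂ (fun z => bigXi (z - b)) w :=
      (differentiable_bigXi (w - b)).comp (f := fun z => z - (b : ℂ)) w (by fun_prop)
    have h2 : DifferentiableAt ℂ (fun z => bigXi (z + b)) w :=
      (differentiable_bigXi (w + b)).comp (f := fun z => z + (b : ℂ)) w (by fun_prop)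
    exact (h1.mul (h2.inv (hne w hw'))).differentiableWithinAt
  · refine ⟨1 / B, ?_, (C₀ + C₁) * (4 * B ^ 2), ?_⟩
    · rw [div_lt_div_iff₀ (by linarith) (by linarith)]
      nlinarith [Real.pi_gt_three]
    · refine Asymptotics.IsBigO.of_bound 1 ?_
      rw [Filter.eventually_inf_principal]
      refine Filter.Eventually.of_forall fun w hw => ?_
      have hw1 : 1 / 2 < w.re := hw.1
      have hw2 : w.re < B + 1 := hw.2
      have h1 := hC₀ (w - b) (by simp; linarith) (by simp; linarith)
      have h2 := hC₁ (w + b) (by simp; linarith) (by simp; linarith)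
      simp only [Complex.sub_im, Complex.ofReal_im, sub_zero, Complex.add_im, add_zero] at h1 h2
      have hB0 : 0 < B := by linarith
      have ht := abs_nonneg w.im
      have h3 : (1 + |w.im|) ^ 2 ≤ 4 * B ^ 2 * Real.exp (1 / B * |w.im|) := by
        have h4 := Real.add_one_le_exp (|w.im| / (2 * B))
        have h5 : 1 + |w.im| ≤ 2 * B * Real.exp (|w.im| / (2 * B)) := by
          have h6 : 2 * B * (|w.im| / (2 * B) + 1) = |w.im| + 2 * B := by
            field_simp
          nlinarith
        have h6 : 4 * B ^ 2 * Real.exp (1 / B * |w.im|) =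
            (2 * B * Real.exp (|w.im| / (2 * B))) ^ 2 := by
          rw [mul_pow, ← Real.exp_nat_mul, mul_pow]
          congr 2
          · norm_num
          · push_cast
            field_simp
        rw [h6]
        gcongr
      rw [norm_mul, one_mul, Real.norm_of_nonneg (Real.exp_pos _).le]
      calc _ ≤ (C₀ * (1 + |w.im|) ^ 2) * Real.exp (C₁ * (1 + |w.im|) ^ 2) := by gcongr
        _ ≤ Real.exp (C₀ * (1 + |w.im|) ^ 2) * Real.exp (C₁ * (1 + |w.im|) ^ 2) := by
            gcongr
            linarith [Real.add_one_le_exp (C₀ * (1 + |w.im|) ^ 2)]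
        _ = Real.exp ((C₀ + C₁) * (1 + |w.im|) ^ 2) := by
            rw [← Real.exp_add]
            ring_nf
        _ ≤ _ := by
            refine Real.exp_le_exp.mpr ?_
            rw [mul_assoc]
            gcongr
  · intro w hw
    have e : bigXi (w - b) = (starRingEnd ℂ) (bigXi (w + b)) := by
      rw [← bigXi_conj, ← bigXi_one_sub]
      congr 1
      apply Complex.ext
      · simp
        linarith
      · simp
    rw [e, norm_mul, norm_inv, Complex.norm_conj, mul_inv_cancel₀]
    exact norm_ne_zero_iff.mpr (hne w hw.ge)
  · intro w hw
    have h := norm_bigXi_le_of_re_nonneg (x := w.re - b) (y := w.re + b) (t := w.im) hB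
      (by linarith) (by linarith)
    have e1 : ((w.re - b : ℝ) : ℂ) + w.im * I = w - b := by
      apply Complex.ext <;> simp
    have e2 : ((w.re + b : ℝ) : ℂ) + w.im * I = w + b := by
      apply Complex.ext <;> simp
    rw [e1, e2] at h
    rw [norm_mul, norm_inv]
    exact mul_inv_le_one_of_le₀ h (norm_nonneg _)

/-- Under RH the real part of the logarithmic derivative of `bigXi` is nonnegative to
the right of the critical line. -/
theorem re_logDeriv_bigXi_nonneg (hRH : RiemannHypothesis) {z : ℂ} (hz : 1 / 2 < z.re) :
    0 ≤ (logDeriv bigXi z).re := by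
  obtain ⟨B, hB2, hB⟩ := exists_re_logDeriv_bigXi_nonneg
  rcases le_total B z.re with h | h
  · exact hB z h
  have hne := bigXi_ne_zero hRH hz
  have hder : HasDerivAt (fun b : ℝ => (bigXi (z - b) * (bigXi (z + b))⁻¹).re)
      ((-2 * logDeriv bigXi z).re) 0 := by
    have h1 : HasDerivAt (fun b : ℂ => z - b) (-1) ((0 : ℝ) : ℂ) := by
      simpa using (hasDerivAt_id ((0 : ℝ) : ℂ)).const_sub z
    have h2 : HasDerivAt (fun b : ℂ => z + b) 1 ((0 : ℝ) : ℂ) := by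
      simpa using (hasDerivAt_id ((0 : ℝ) : ℂ)).const_add z
    have h3 := (differentiable_bigXi (z - ((0 : ℝ) : ℂ))).hasDerivAt.comp ((0 : ℝ) : ℂ) h1
    have h4 := (differentiable_bigXi (z + ((0 : ℝ) : ℂ))).hasDerivAt.comp ((0 : ℝ) : ℂ) h2
    have h5 := (h3.mul (h4.inv (by simpa using hne))).real_of_complex
    refine h5.congr_deriv ?_
    congr 1
    simp only [Function.comp_apply, Complex.ofReal_zero, sub_zero, add_zero, Pi.inv_apply]
    rw [logDeriv_apply]
    field_simp
    ring
  by_contra hneg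
  push Not at hneg
  have hpos : 0 < (-2 * logDeriv bigXi z).re := by
    have : (-2 * logDeriv bigXi z).re = -2 * (logDeriv bigXi z).re := by
      simp
    rw [this]
    linarith
  refine absurd (le_of_tendsto hder.tendsto_slope_zero_right ?_) (not_le.mpr hpos)
  filter_upwards [Ioc_mem_nhdsGT (zero_lt_one (α := ℝ))] with b hb
  have h1 := (Complex.re_le_norm _).trans
    (norm_bigXi_div_le_one hRH hB2 hB hb.1 hb.2 hz.le (by linarith))
  rw [zero_add, smul_eq_mul]
  refine mul_nonpos_of_nonneg_of_nonpos (inv_nonneg.mpr hb.1.le) ?_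
  simp only [Complex.ofReal_zero, sub_zero, add_zero, mul_inv_cancel₀ hne, Complex.one_re]
  linarith

theorem exists_norm_logDeriv_bigXi_le_sqrt (hRH : RiemannHypothesis) {a : ℝ} (ha : 0 < a) :
    ∃ C : ℝ, 0 ≤ C ∧ ∀ z : ℂ, 1 / 2 + a ≤ z.re → z.re ≤ 2 →
      ‖logDeriv bigXi z‖ ≤ C * (1 + |z.im|) ^ (1 / 2 : ℝ) := by
  obtain ⟨K, hK0, hK⟩ := exists_norm_logDeriv_bigXi_le
  refine ⟨2 * (3 / 2) / a + (K * 3) * 3 / a, by positivity, fun z hz1 hz2 => ?_⟩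
  set t := z.im
  have ht := abs_nonneg t
  set c : ℂ := 2 + t * I
  have hcre : c.re = 2 := by simp [c]
  have hmem : ∀ w ∈ Metric.ball (0 : ℂ) (3 / 2), 1 / 2 < (c + w).re := by
    intro w hw
    rw [mem_ball_zero_iff] at hw
    have h1 := (abs_lt.mp ((Complex.abs_re_le_norm w).trans_lt hw)).1
    rw [Complex.add_re, hcre]
    linarith
  have hzc : ‖z - c‖ = 2 - z.re := by
    have : z - c = ((z.re - 2 : ℝ) : ℂ) := by
      apply Complex.ext <;> simp [c, t]
    rw [this, Complex.norm_real, Real.norm_eq_abs, abs_of_nonpos (by linarith)]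
    ring
  have hzmem : z - c ∈ Metric.ball (0 : ℂ) (3 / 2) := by
    rw [mem_ball_zero_iff, hzc]
    linarith
  have hd : DifferentiableOn ℂ (fun w => -logDeriv bigXi (c + w)) (Metric.ball 0 (3 / 2)) := by
    intro w hw
    have h1 : DifferentiableAt ℂ (deriv bigXi) (c + w) :=
      (differentiable_bigXi.analyticAt (c + w)).deriv.differentiableAt
    have h2 : DifferentiableAt ℂ (logDeriv bigXi) (c + w) :=
      h1.div (differentiable_bigXi (c + w)) (bigXi_ne_zero hRH (hmem w hw))
    exact (h2.comp (f := fun w => c + w) w (by fun_prop)).neg.differentiableWithinAt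
  have hBC := Complex.borelCaratheodory (f := fun w => -logDeriv bigXi (c + w)) one_pos hd
    (fun w hw => by
      have := re_logDeriv_bigXi_nonneg hRH (hmem w hw)
      simp only [Set.mem_ofPred_eq, Complex.neg_re]
      linarith) (by norm_num) hzmem
  simp only [add_sub_cancel, add_zero, norm_neg, hzc] at hBC
  have h1 : (1 : ℝ) ≤ (1 + |t|) ^ (1 / 2 : ℝ) := Real.one_le_rpow (by linarith) (by norm_num)
  have hc : ‖logDeriv bigXi c‖ ≤ K * 3 * (1 + |t|) ^ (1 / 2 : ℝ) := by
    refine (hK c hcre.ge).trans ?_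
    rw [mul_assoc]
    refine mul_le_mul_of_nonneg_left ?_ hK0
    have h2 : ‖c‖ ≤ 4 * (1 + |t|) := by
      refine (norm_add_le _ _).trans ?_
      rw [norm_mul, norm_I, Complex.norm_real, Real.norm_eq_abs]
      simp
      linarith
    have h3 : √‖c‖ ≤ 2 * (1 + |t|) ^ (1 / 2 : ℝ) := by
      refine (Real.sqrt_le_sqrt h2).trans ?_
      rw [Real.sqrt_mul (by norm_num), ← Real.sqrt_eq_rpow,
        show (4 : ℝ) = 2 ^ 2 by norm_num, Real.sqrt_sq (by norm_num)]
    linarith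
  refine hBC.trans ?_
  have h4 : 2 * 1 * (2 - z.re) / (3 / 2 - (2 - z.re)) ≤ 2 * (3 / 2) / a := by
    have : 2 - z.re ≤ 3 / 2 := by linarith
    have : a ≤ 3 / 2 - (2 - z.re) := by linarith
    have : 0 ≤ 2 - z.re := by linarith
    rw [mul_one]
    gcongr
  have h5 : ‖logDeriv bigXi c‖ * (3 / 2 + (2 - z.re)) / (3 / 2 - (2 - z.re)) ≤
      (K * 3 * (1 + |t|) ^ (1 / 2 : ℝ)) * 3 / a := by
    have : 3 / 2 + (2 - z.re) ≤ 3 := by linarith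
    have : a ≤ 3 / 2 - (2 - z.re) := by linarith
    have : 0 ≤ 3 / 2 + (2 - z.re) := by linarith
    gcongr
  have h6 : 2 * (3 / 2) / a ≤ 2 * (3 / 2) / a * (1 + |t|) ^ (1 / 2 : ℝ) :=
    le_mul_of_one_le_right (by positivity) h1
  calc _ ≤ 2 * (3 / 2) / a * (1 + |t|) ^ (1 / 2 : ℝ) +
        (K * 3 * (1 + |t|) ^ (1 / 2 : ℝ)) * 3 / a := by linarith
    _ = _ := by ring

theorem integrable_one_add_abs_rpow {r : ℝ} (hr : 1 < r) :
    Integrable fun τ : ℝ => (1 + |τ|) ^ (-r) := by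
  have := integrable_one_add_norm (E := ℝ) (μ := volume) (r := r) (by simpa using hr)
  simpa [Real.norm_eq_abs] using this

/-- Vertical lines of integration may be moved across a strip on which the integrand is
holomorphic and decays. -/
theorem integral_vertical_eq {f : ℂ → ℂ} {β C : ℝ} (hβ : 0 ≤ β)
    (hf : DifferentiableOn ℂ f {s | 0 ≤ s.re})
    (hC : ∀ s : ℂ, 0 ≤ s.re → s.re ≤ β → ‖f s‖ ≤ C * (1 + |s.im|) ^ (-(3 / 2) : ℝ)) :
    ∫ τ : ℝ, f (τ * I) = ∫ τ : ℝ, f (β + τ * I) := by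
  have hinteg : ∀ σ : ℝ, 0 ≤ σ → σ ≤ β → Integrable fun τ : ℝ => f (σ + τ * I) := by
    intro σ h1 h2
    refine Integrable.mono' ((integrable_one_add_abs_rpow (r := 3 / 2) (by norm_num)).const_mul C)
      ?_ (Eventually.of_forall fun τ => ?_)
    · refine Continuous.aestronglyMeasurable ?_
      refine hf.continuousOn.comp_continuous (by fun_prop) fun τ => ?_
      simpa using h1
    · simpa using hC (σ + τ * I) (by simpa using h1) (by simpa using h2)
  have h0 := hinteg 0 le_rfl hβ
  simp only [Complex.ofReal_zero, zero_add] at h0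
  have hlim0 := intervalIntegral_tendsto_integral h0 tendsto_neg_atTop_atBot tendsto_id
  have hlimβ := intervalIntegral_tendsto_integral (hinteg β hβ le_rfl) tendsto_neg_atTop_atBot
    tendsto_id
  have hlim := hlimβ.sub hlim0
  have hbd : ∀ T : ℝ, 0 ≤ T → ‖(∫ τ in (-T)..T, f (β + τ * I)) - ∫ τ in (-T)..T, f (τ * I)‖ ≤
      2 * (C * β) * (1 + T) ^ (-(3 / 2) : ℝ) := by
    intro T hT
    have h := Complex.integral_boundary_rect_eq_zero_of_differentiableOn f
      (((-T : ℝ) : ℂ) * I) (β + T * I) (hf.mono fun s hs => by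
        have := hs.1
        simp only [Set.mem_preimage, Complex.mul_re, Complex.ofReal_re, Complex.I_re,
          Complex.ofReal_im, Complex.I_im, Complex.add_re] at this
        norm_num at this
        rw [Set.uIcc_of_le hβ] at this
        exact this.1)
    simp only [Complex.mul_re, Complex.ofReal_re, Complex.I_re, Complex.ofReal_im, Complex.I_im,
      Complex.add_re, Complex.mul_im, Complex.add_im, mul_zero, mul_one, zero_add,
      add_zero, sub_self, Complex.ofReal_zero] at h
    have hh : ∀ T' : ℝ, |T'| = T → ‖∫ x in (0 : ℝ)..β, f (x + T' * I)‖ ≤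
        C * β * (1 + T) ^ (-(3 / 2) : ℝ) := by
      intro T' hT'
      have := intervalIntegral.norm_integral_le_of_norm_le_const (a := 0) (b := β)
        (f := fun x : ℝ => f (x + T' * I)) (C := C * (1 + T) ^ (-(3 / 2) : ℝ)) (fun x hx => by
          rw [Set.uIoc_of_le hβ] at hx
          have := hC (x + T' * I) (by simpa using hx.1.le) (by simpa using hx.2)
          simpa [hT'] using this)
      rw [sub_zero, abs_of_nonneg hβ] at this
      linarith
    have h1 := hh T (abs_of_nonneg hT)
    have h2 := hh (-T) (by rw [abs_neg, abs_of_nonneg hT])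
    have e : ‖(∫ τ in (-T)..T, f (β + τ * I)) - ∫ τ in (-T)..T, f (τ * I)‖ =
        ‖(∫ x in (0 : ℝ)..β, f (x + T * I)) - ∫ x in (0 : ℝ)..β, f (x + (-T : ℝ) * I)‖ := by
      have : (∫ x in (0 : ℝ)..β, f (x + T * I)) - ∫ x in (0 : ℝ)..β, f (x + (-T : ℝ) * I) =
          I * ((∫ τ in (-T)..T, f (β + τ * I)) - ∫ τ in (-T)..T, f (τ * I)) := by
        simp only [smul_eq_mul] at h
        linear_combination (-1 : ℂ) * h
      rw [this, norm_mul, norm_I, one_mul]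
    rw [e]
    refine (norm_sub_le _ _).trans ?_
    linarith
  have hz : Tendsto (fun T : ℝ => 2 * (C * β) * (1 + T) ^ (-(3 / 2) : ℝ)) atTop (𝓝 0) := by
    have h1 := (tendsto_rpow_neg_atTop (y := 3 / 2) (by norm_num)).comp
      (tendsto_atTop_add_const_left atTop (1 : ℝ) tendsto_id)
    simpa using h1.const_mul (2 * (C * β))
  have hlim' := squeeze_zero_norm' (Filter.eventually_atTop.mpr ⟨0, hbd⟩) hz
  have := tendsto_nhds_unique hlim hlim'
  exact (sub_eq_zero.mp this).symm

/-- The triangular function supported on `[-δ, δ]`. -/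
noncomputable def tent (δ x : ℝ) : ℝ := max (δ - |x|) 0

theorem tent_nonneg (δ x : ℝ) : 0 ≤ tent δ x := le_max_right _ _

theorem tent_neg (δ x : ℝ) : tent δ (-x) = tent δ x := by rw [tent, tent, abs_neg]

theorem continuous_tent (δ : ℝ) : Continuous (tent δ) := by
  unfold tent
  fun_prop

theorem tent_eq_zero {δ x : ℝ} (h : δ ≤ |x|) : tent δ x = 0 :=
  max_eq_right (by linarith)

theorem tent_le {δ : ℝ} (hδ : 0 ≤ δ) (x : ℝ) : tent δ x ≤ δ :=
  max_le (by linarith [abs_nonneg x]) hδ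

/-- The two-sided Laplace transform of `tent δ`. -/
noncomputable def tentLaplace (δ : ℝ) (s : ℂ) : ℂ := (δ * dslope Complex.sinh 0 (δ * s / 2)) ^ 2

theorem differentiable_dslope_sinh : Differentiable ℂ (dslope Complex.sinh 0) := by
  rw [← differentiableOn_univ, Complex.differentiableOn_dslope Filter.univ_mem]
  exact Complex.differentiable_sinh.differentiableOn

theorem differentiable_tentLaplace (δ : ℝ) : Differentiable ℂ (tentLaplace δ) := by
  have h : Differentiable ℂ fun s : ℂ => dslope Complex.sinh 0 (δ * s / 2) :=
    differentiable_dslope_sinh.comp (by fun_prop)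
  exact (h.const_mul _).pow 2

theorem dslope_sinh_zero {w : ℂ} (hw : w ≠ 0) : dslope Complex.sinh 0 w = Complex.sinh w / w := by
  rw [dslope_of_ne _ hw, slope_def_field]
  simp

theorem tentLaplace_of_ne_zero {δ : ℝ} {s : ℂ} (hδ : δ ≠ 0) (hs : s ≠ 0) :
    tentLaplace δ s = (Complex.exp (δ * s) + Complex.exp (-(δ * s)) - 2) / s ^ 2 := by
  have hδ' : (δ : ℂ) ≠ 0 := by exact_mod_cast hδ
  have hw : (δ : ℂ) * s / 2 ≠ 0 := by
    simp [hδ', hs]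
  rw [tentLaplace, dslope_sinh_zero hw, Complex.sinh]
  have e1 : Complex.exp (δ * s) = Complex.exp (δ * s / 2) ^ 2 := by
    rw [← Complex.exp_nat_mul]
    congr 1
    push_cast
    ring
  have e2 : Complex.exp (-(δ * s)) = Complex.exp (-(δ * s / 2)) ^ 2 := by
    rw [← Complex.exp_nat_mul]
    congr 1
    push_cast
    ring
  have e3 : Complex.exp (δ * s / 2) * Complex.exp (-(δ * s / 2)) = 1 := by
    rw [← Complex.exp_add]
    simp
  rw [e1, e2]
  field_simp
  linear_combination (-2 : ℂ) * e3

theorem tentLaplace_mul_I (δ τ : ℝ) : ∃ r : ℝ, 0 ≤ r ∧ tentLaplace δ (τ * I) = r := by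
  by_cases h : δ * τ / 2 = 0
  · refine ⟨δ ^ 2, sq_nonneg _, ?_⟩
    have e : (δ : ℂ) * (τ * I) / 2 = 0 := by
      have : (δ : ℂ) * (τ * I) / 2 = ((δ * τ / 2 : ℝ) : ℂ) * I := by
        push_cast
        ring
      rw [this, h]
      simp
    rw [tentLaplace, e, dslope_same, Complex.deriv_sinh]
    simp
  · refine ⟨(δ * (Real.sin (δ * τ / 2) / (δ * τ / 2))) ^ 2, sq_nonneg _, ?_⟩
    have e : (δ : ℂ) * (τ * I) / 2 = ((δ * τ / 2 : ℝ) : ℂ) * I := by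
      push_cast
      ring
    have hne : ((δ * τ / 2 : ℝ) : ℂ) ≠ 0 := by exact_mod_cast h
    rw [tentLaplace, e, dslope_sinh_zero (mul_ne_zero hne I_ne_zero), Complex.sinh_mul_I]
    rw [mul_div_mul_right _ _ I_ne_zero, ← Complex.ofReal_sin]
    push_cast
    ring

theorem exists_norm_tentLaplace_le (δ : ℝ) (β : ℝ) :
    ∃ C : ℝ, 0 ≤ C ∧ ∀ s : ℂ, 0 ≤ s.re → s.re ≤ β →
      ‖tentLaplace δ s‖ ≤ C * (1 + |s.im|) ^ (-2 : ℝ) := by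
  by_cases hδ : δ = 0
  · exact ⟨0, le_rfl, fun s _ _ => by simp [tentLaplace, hδ]⟩
  have hcomp : IsCompact (Set.Icc 0 β ×ℂ Set.Icc (-1) 1) := isCompact_Icc.reProdIm isCompact_Icc
  obtain ⟨C, hC⟩ := hcomp.exists_bound_of_continuousOn
    (differentiable_tentLaplace δ).continuous.continuousOn
  set D := 2 * Real.exp (|δ| * β) + 2
  refine ⟨4 * |C| + 4 * D, by positivity, fun s h1 h2 => ?_⟩
  have ht := abs_nonneg s.im
  rw [Real.rpow_neg (by positivity), Real.rpow_two, ← div_eq_mul_inv, le_div_iff₀ (by positivity)]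
  have hD : 0 < D := by positivity
  rcases le_total |s.im| 1 with h | h
  · have h3 := (hC s ⟨⟨h1, h2⟩, abs_le.mp h⟩).trans (le_abs_self C)
    have h4 : (1 + |s.im|) ^ 2 ≤ 4 := by nlinarith
    have h5 := mul_le_mul h3 h4 (by positivity) (abs_nonneg C)
    linarith
  · have hs : s ≠ 0 := by
      rintro rfl
      simp at h
      linarith
    rw [tentLaplace_of_ne_zero hδ hs, norm_div, norm_pow, div_mul_eq_mul_div,
      div_le_iff₀ (by positivity)]
    have e1 : ‖Complex.exp (δ * s)‖ ≤ Real.exp (|δ| * β) := by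
      rw [Complex.norm_exp, Complex.re_ofReal_mul]
      refine Real.exp_le_exp.mpr ?_
      refine (mul_le_mul_of_nonneg_right (le_abs_self δ) h1).trans ?_
      gcongr
    have e2 : ‖Complex.exp (-(δ * s))‖ ≤ Real.exp (|δ| * β) := by
      rw [Complex.norm_exp, Complex.neg_re, Complex.re_ofReal_mul]
      refine Real.exp_le_exp.mpr ?_
      have := mul_le_mul_of_nonneg_right (neg_le_abs δ) h1
      have : |δ| * s.re ≤ |δ| * β := by gcongr
      linarith
    have e3 : ‖Complex.exp (δ * s) + Complex.exp (-(δ * s)) - 2‖ ≤ D := by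
      refine (norm_sub_le _ _).trans ?_
      have := norm_add_le (Complex.exp (δ * s)) (Complex.exp (-(δ * s)))
      have h2 : ‖(2 : ℂ)‖ = 2 := by simp
      rw [h2]
      simp only [D]
      linarith
    have e4 : (1 + |s.im|) ^ 2 ≤ 4 * ‖s‖ ^ 2 := by
      have := Complex.abs_im_le_norm s
      nlinarith
    have e5 := mul_le_mul e3 e4 (by positivity) hD.le
    have e6 : 0 ≤ 4 * |C| * ‖s‖ ^ 2 := by positivity
    linarith

theorem mellin_tent_log {δ : ℝ} (hδ : 0 < δ) {s : ℂ} (hs : 0 < s.re) :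
    MellinConvergent (fun y => (tent δ (Real.log y) : ℂ)) s ∧
      mellin (fun y => (tent δ (Real.log y) : ℂ)) s = tentLaplace δ s := by
  have hs0 : s ≠ 0 := by
    rintro rfl
    simp at hs
  set g : ℝ → ℂ := fun y => (y : ℂ) ^ (s - 1) • (tent δ (Real.log y) : ℂ)
  have hsub : Set.Ioc (Real.exp (-δ)) (Real.exp δ) ⊆ Set.Ioi 0 := fun y hy =>
    (Real.exp_pos _).trans hy.1
  have hle : Real.exp (-δ) ≤ Real.exp δ := Real.exp_le_exp.mpr (by linarith)
  have hcont : ContinuousOn g (Set.Icc (Real.exp (-δ)) (Real.exp δ)) := by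
    intro y hy
    have hy0 : 0 < y := (Real.exp_pos _).trans_le hy.1
    refine ContinuousAt.continuousWithinAt (ContinuousAt.smul (f := fun y : ℝ => (y : ℂ) ^ (s - 1))
      (g := fun y : ℝ => (tent δ (Real.log y) : ℂ)) ?_ ?_)
    · exact Complex.continuousAt_ofReal_cpow_const y (s - 1) (Or.inr hy0.ne')
    · exact Complex.continuous_ofReal.continuousAt.comp
        ((continuous_tent δ).continuousAt.comp (Real.continuousAt_log hy0.ne'))
  have hzero : ∀ y ∈ Set.Ioi (0 : ℝ) \ Set.Ioc (Real.exp (-δ)) (Real.exp δ), g y = 0 := by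
    intro y hy
    have hy0 : 0 < y := hy.1
    have : δ ≤ |Real.log y| := by
      rcases le_or_gt y (Real.exp (-δ)) with h | h
      · rw [le_abs]
        right
        have := (Real.log_le_iff_le_exp hy0).mpr h
        linarith
      · have h2 : Real.exp δ < y := by
          by_contra h3
          exact hy.2 ⟨h, not_lt.mp h3⟩
        rw [le_abs]
        left
        exact ((Real.lt_log_iff_exp_lt hy0).mpr h2).le
    simp only [g, tent_eq_zero this]
    simp
  have hinteg : IntegrableOn g (Set.Ioc (Real.exp (-δ)) (Real.exp δ)) :=
    hcont.integrableOn_Icc.mono_set Set.Ioc_subset_Icc_self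
  refine ⟨hinteg.of_forall_sdiff_eq_zero measurableSet_Ioi hzero, ?_⟩
  rw [mellin]
  change ∫ y in Set.Ioi (0 : ℝ), g y = _
  rw [setIntegral_eq_of_subset_of_forall_sdiff_eq_zero measurableSet_Ioi hsub hzero,
    ← intervalIntegral.integral_of_le hle]
  have hP : ∀ y : ℝ, 0 < y → HasDerivAt (fun y : ℝ => (y : ℂ) ^ s / s) ((y : ℂ) ^ (s - 1)) y := by
    intro y hy
    refine ((hasDerivAt_ofReal_cpow_const hy.ne' hs0).div_const s).congr_deriv ?_
    field_simp
  have hmul : ∀ y : ℝ, 0 < y → (y : ℂ) ^ s * (y : ℂ)⁻¹ = (y : ℂ) ^ (s - 1) := by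
    intro y hy
    have hy' : (y : ℂ) ≠ 0 := by exact_mod_cast hy.ne'
    rw [Complex.cpow_sub _ _ hy', Complex.cpow_one, div_eq_mul_inv]
  have hlog : ∀ y : ℝ, 0 < y → HasDerivAt (fun y : ℝ => (Real.log y : ℂ)) ((y : ℂ)⁻¹) y := by
    intro y hy
    simpa using (Real.hasDerivAt_log hy.ne').ofReal_comp
  have hexp : ∀ x : ℝ, ((Real.exp x : ℝ) : ℂ) ^ s = Complex.exp (x * s) := by
    intro x
    rw [Complex.cpow_def_of_ne_zero (by exact_mod_cast (Real.exp_pos x).ne'),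
      ← Complex.ofReal_log (Real.exp_pos x).le, Real.log_exp]
  have h1le : Real.exp (-δ) ≤ 1 := Real.exp_le_one_iff.mpr (by linarith)
  have h1ge : 1 ≤ Real.exp δ := Real.one_le_exp hδ.le
  have hi1 : IntervalIntegrable g volume (Real.exp (-δ)) 1 :=
    (hcont.mono (by
      rw [Set.uIcc_of_le h1le]
      exact Set.Icc_subset_Icc_right h1ge)).intervalIntegrable
  have hi2 : IntervalIntegrable g volume 1 (Real.exp δ) :=
    (hcont.mono (by
      rw [Set.uIcc_of_le h1ge]
      exact Set.Icc_subset_Icc_left h1le)).intervalIntegrable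
  rw [← intervalIntegral.integral_add_adjacent_intervals hi1 hi2]
  have hA : ∫ y in (Real.exp (-δ))..1, g y =
      (δ / s - 1 / s / s) - (0 - Complex.exp (-δ * s) / s / s) := by
    have := intervalIntegral.integral_eq_sub_of_hasDerivAt
      (f := fun y : ℝ => (y : ℂ) ^ s / s * (δ + Real.log y) - (y : ℂ) ^ s / s / s)
      (f' := g) (a := Real.exp (-δ)) (b := 1) (fun y hy => by
        rw [Set.uIcc_of_le h1le] at hy
        have hy0 : 0 < y := (Real.exp_pos _).trans_le hy.1
        refine (((hP y hy0).mul ((hlog y hy0).const_add (δ : ℂ))).sub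
          ((hP y hy0).div_const s)).congr_deriv ?_
        have hly : Real.log y ≤ 0 := Real.log_nonpos hy0.le hy.2
        have hly2 : -δ ≤ Real.log y := (Real.le_log_iff_exp_le hy0).mpr hy.1
        have : tent δ (Real.log y) = δ + Real.log y := by
          rw [tent, abs_of_nonpos hly, max_eq_left (by linarith)]
          ring
        simp only [g, this, smul_eq_mul]
        push_cast
        linear_combination (1 / s) * hmul y hy0) hi1
    rw [this, hexp]
    simp
    ring
  have hB : ∫ y in (1 : ℝ)..(Real.exp δ), g y =
      (Complex.exp (δ * s) / s / s) - (δ / s + 1 / s / s) := by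
    have := intervalIntegral.integral_eq_sub_of_hasDerivAt
      (f := fun y : ℝ => (y : ℂ) ^ s / s * (δ - Real.log y) + (y : ℂ) ^ s / s / s)
      (f' := g) (a := 1) (b := Real.exp δ) (fun y hy => by
        rw [Set.uIcc_of_le h1ge] at hy
        have hy0 : 0 < y := zero_lt_one.trans_le hy.1
        refine (((hP y hy0).mul ((hlog y hy0).const_sub (δ : ℂ))).add
          ((hP y hy0).div_const s)).congr_deriv ?_
        have hly : 0 ≤ Real.log y := Real.log_nonneg hy.1
        have hly2 : Real.log y ≤ δ := (Real.log_le_iff_le_exp hy0).mpr hy.2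
        have : tent δ (Real.log y) = δ - Real.log y := by
          rw [tent, abs_of_nonneg hly, max_eq_left (by linarith)]
        simp only [g, this, smul_eq_mul]
        push_cast
        linear_combination (-1 / s) * hmul y hy0) hi2
    rw [this, hexp]
    simp
    ring
  rw [hA, hB, tentLaplace_of_ne_zero hδ.ne' hs0, neg_mul]
  field_simp
  ring

theorem integrable_tentLaplace (δ : ℝ) {β : ℝ} (hβ : 0 ≤ β) :
    Integrable fun τ : ℝ => tentLaplace δ (β + τ * I) := by
  obtain ⟨C, hC0, hC⟩ := exists_norm_tentLaplace_le δ β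
  refine Integrable.mono' ((integrable_one_add_abs_rpow (r := 2) (by norm_num)).const_mul C)
    ?_ (Eventually.of_forall fun τ => ?_)
  · exact ((differentiable_tentLaplace δ).continuous.comp (by fun_prop)).aestronglyMeasurable
  · simpa using hC (β + τ * I) (by simpa using hβ) (by simp)

theorem integral_tentLaplace {δ : ℝ} (hδ : 0 < δ) {β : ℝ} (hβ : 0 < β) (u : ℝ) :
    ∫ τ : ℝ, tentLaplace δ (β + τ * I) * Complex.exp (u * (β + τ * I)) =
      2 * Real.pi * tent δ u := by
  have hon : ∀ τ : ℝ, mellin (fun y => (tent δ (Real.log y) : ℂ)) (β + τ * I) =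
      tentLaplace δ (β + τ * I) := fun τ => (mellin_tent_log hδ (by simpa using hβ)).2
  have h := mellinInv_mellin_eq β (fun y => (tent δ (Real.log y) : ℂ)) (Real.exp_pos (-u))
    (mellin_tent_log hδ (by simpa using hβ)).1
    (by
      rw [Complex.VerticalIntegrable]
      simp_rw [hon]
      exact integrable_tentLaplace δ hβ.le)
    (Complex.continuous_ofReal.continuousAt.comp
        ((continuous_tent δ).continuousAt.comp (Real.continuousAt_log (Real.exp_pos _).ne')))
  rw [mellinInv] at h
  simp_rw [hon] at h
  rw [Real.log_exp, tent_neg] at h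
  have e : ∀ τ : ℝ, ((Real.exp (-u) : ℝ) : ℂ) ^ (-((β : ℂ) + τ * I)) • tentLaplace δ (β + τ * I) =
      tentLaplace δ (β + τ * I) * Complex.exp (u * (β + τ * I)) := by
    intro τ
    rw [Complex.cpow_def_of_ne_zero (by exact_mod_cast (Real.exp_pos (-u)).ne'),
      ← Complex.ofReal_log (Real.exp_pos _).le, Real.log_exp, smul_eq_mul, mul_comm]
    congr 2
    push_cast
    ring
  simp_rw [e] at h
  have hpi : (Real.pi : ℂ) ≠ 0 := by exact_mod_cast Real.pi_ne_zero
  rw [← h, Complex.real_smul, ← mul_assoc]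
  push_cast
  rw [mul_one_div_cancel (mul_ne_zero two_ne_zero hpi), one_mul]

/-- The integral of `tent δ` against a one-sided exponential. -/
noncomputable def expTent (δ κ u : ℝ) : ℝ :=
  ∫ v in Set.Ioi (0 : ℝ), Real.exp (-(κ * v)) * tent δ (u - v)

/-- The kernel `T(s) e^{us}` on the line `Re s = β`. -/
noncomputable def tentKernel (δ β u τ : ℝ) : ℂ :=
  tentLaplace δ (β + τ * I) * Complex.exp (u * (β + τ * I))

theorem continuous_tentKernel (δ β u : ℝ) : Continuous (tentKernel δ β u) := by
  have := (differentiable_tentLaplace δ).continuous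
  unfold tentKernel
  fun_prop

theorem norm_tentKernel (δ β u τ : ℝ) :
    ‖tentKernel δ β u τ‖ = ‖tentLaplace δ (β + τ * I)‖ * Real.exp (u * β) := by
  rw [tentKernel, norm_mul, Complex.norm_exp]
  simp

theorem integrable_tentKernel (δ : ℝ) {β : ℝ} (hβ : 0 ≤ β) (u : ℝ) :
    Integrable (tentKernel δ β u) := by
  refine Integrable.mono' ((integrable_tentLaplace δ hβ).norm.mul_const (Real.exp (u * β)))
    (continuous_tentKernel δ β u).aestronglyMeasurable
    (Filter.Eventually.of_forall fun τ => (norm_tentKernel δ β u τ).le)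

theorem integral_tentKernel {δ : ℝ} (hδ : 0 < δ) {β : ℝ} (hβ : 0 < β) (u : ℝ) :
    ∫ τ, tentKernel δ β u τ = 2 * Real.pi * tent δ u :=
  integral_tentLaplace hδ hβ u

theorem integral_tentKernel_div {δ : ℝ} (hδ : 0 < δ) {β : ℝ} (hβ : 0 < β) {κ : ℝ}
    (hκ : 0 < β + κ) (u : ℝ) :
    ∫ τ : ℝ, tentKernel δ β u τ / ((β + τ * I) + κ) = 2 * Real.pi * expTent δ κ u := by
  have h1 : ∀ τ : ℝ, tentKernel δ β u τ / ((β + τ * I) + κ) =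
      ∫ v in Set.Ioi (0 : ℝ), tentKernel δ β u τ * Complex.exp (-((β + τ * I) + κ) * v) := by
    intro τ
    have hre : (-(((β : ℂ) + τ * I) + κ)).re < 0 := by
      simp
      linarith
    rw [MeasureTheory.integral_const_mul, integral_exp_mul_complex_Ioi hre]
    have hne : ((β : ℂ) + τ * I) + κ ≠ 0 := by
      intro h
      rw [h] at hre
      simp at hre
    simp only [Complex.ofReal_zero, mul_zero, Complex.exp_zero]
    rw [div_neg, neg_div, neg_neg, mul_one_div]
  have h2 : ∀ v : ℝ, ∫ τ : ℝ, tentKernel δ β u τ * Complex.exp (-((β + τ * I) + κ) * v) =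
      2 * Real.pi * ((Real.exp (-(κ * v)) * tent δ (u - v) : ℝ) : ℂ) := by
    intro v
    have : ∀ τ : ℝ, tentKernel δ β u τ * Complex.exp (-((β + τ * I) + κ) * v) =
        Complex.exp (-(κ * v)) * tentKernel δ β (u - v) τ := by
      intro τ
      rw [tentKernel, tentKernel, mul_assoc, ← Complex.exp_add, mul_left_comm, ← Complex.exp_add]
      congr 2
      push_cast
      ring
    simp_rw [this]
    rw [MeasureTheory.integral_const_mul, integral_tentKernel hδ hβ]
    push_cast
    ring
  simp_rw [h1]
  rw [integral_integral_swap]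
  · simp_rw [h2]
    rw [MeasureTheory.integral_const_mul, integral_complex_ofReal]
    rfl
  · have hI : Integrable (fun p : ℝ × ℝ => ‖tentKernel δ β u p.1‖ * Real.exp (-(β + κ) * p.2))
        (volume.prod (volume.restrict (Set.Ioi (0 : ℝ)))) :=
      (integrable_tentKernel δ hβ.le u).norm.mul_prod (integrableOn_exp_mul_Ioi (by linarith) 0)
    refine hI.mono' (Continuous.aestronglyMeasurable ?_) (Filter.Eventually.of_forall fun p => ?_)
    · have := continuous_tentKernel δ β u
      unfold Function.uncurry
      fun_prop
    · simp only [Function.uncurry]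
      rw [norm_mul, Complex.norm_exp]
      refine le_of_eq ?_
      congr 2
      simp

theorem integral_archTerm_mul_tentKernel {δ : ℝ} (hδ : 0 < δ) {a : ℝ}
    (ha1 : a < 3 / 2) (u : ℝ) (n : ℕ) :
    ∫ τ : ℝ, archTerm (2 + τ * I) n * tentKernel δ (3 / 2 - a) u τ =
      2 * Real.pi * ((Real.log (1 + 1 / (n + 1 : ℝ)) / 2 * tent δ u -
        expTent δ (2 * (n + 1) + 1 / 2 + a) u : ℝ) : ℂ) := by
  have hβ : 0 < 3 / 2 - a := by linarith
  have hpos : 0 < (3 / 2 - a) + (2 * (n + 1) + 1 / 2 + a) := by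
    have : (0 : ℝ) ≤ n := by positivity
    linarith
  have hI := integrable_tentKernel δ hβ.le u
  have e : ∀ τ : ℝ, archTerm (2 + τ * I) n * tentKernel δ (3 / 2 - a) u τ =
      ((Real.log (1 + 1 / (n + 1 : ℝ)) / 2 : ℝ) : ℂ) * tentKernel δ (3 / 2 - a) u τ -
        tentKernel δ (3 / 2 - a) u τ / ((((3 / 2 - a : ℝ) : ℂ) + τ * I) +
          ((2 * (n + 1) + 1 / 2 + a : ℝ) : ℂ)) := by
    intro τ
    rw [archTerm, sub_mul, one_div_mul_eq_div]
    congr 2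
    push_cast
    ring
  have hI2 : Integrable fun τ : ℝ => tentKernel δ (3 / 2 - a) u τ /
      ((((3 / 2 - a : ℝ) : ℂ) + τ * I) + ((2 * (n + 1) + 1 / 2 + a : ℝ) : ℂ)) := by
    have hre : ∀ τ : ℝ, ((((3 / 2 - a : ℝ) : ℂ) + τ * I) + ((2 * (n + 1) + 1 / 2 + a : ℝ) : ℂ)).re
        = (3 / 2 - a) + (2 * (n + 1) + 1 / 2 + a) := by
      intro τ
      rw [Complex.add_re, Complex.add_re, Complex.ofReal_re, Complex.ofReal_re]
      simp
    refine (hI.norm.mul_const ((3 / 2 - a) + (2 * (n + 1) + 1 / 2 + a))⁻¹).mono'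
      (Continuous.aestronglyMeasurable ?_) (Eventually.of_forall fun τ => ?_)
    · refine (continuous_tentKernel _ _ _).div (by fun_prop) fun τ h => ?_
      have := hre τ
      rw [h] at this
      simp only [Complex.zero_re] at this
      linarith
    · rw [norm_div, div_eq_mul_inv]
      refine mul_le_mul_of_nonneg_left (inv_anti₀ hpos ?_) (norm_nonneg _)
      rw [← hre τ]
      exact Complex.re_le_norm _
  simp_rw [e]
  rw [integral_sub (hI.const_mul _) hI2, MeasureTheory.integral_const_mul,
    integral_tentKernel hδ hβ, integral_tentKernel_div hδ hβ hpos]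
  push_cast
  ring

theorem hasSum_integral_arch {δ : ℝ} (hδ : 0 < δ) {a : ℝ}
    (ha1 : a < 3 / 2) (u : ℝ) :
    Integrable (fun τ : ℝ => (∑' n, archTerm (2 + τ * I) n) * tentKernel δ (3 / 2 - a) u τ) ∧
    HasSum (fun n : ℕ => 2 * Real.pi * ((Real.log (1 + 1 / (n + 1 : ℝ)) / 2 * tent δ u -
        expTent δ (2 * (n + 1) + 1 / 2 + a) u : ℝ) : ℂ))
      (∫ τ : ℝ, (∑' n, archTerm (2 + τ * I) n) * tentKernel δ (3 / 2 - a) u τ) := by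
  have hβ : 0 < 3 / 2 - a := by linarith
  obtain ⟨C, hC0, hC⟩ := exists_norm_tentLaplace_le δ (3 / 2 - a)
  set E := Real.exp (u * (3 / 2 - a))
  set G : ℝ → ℝ := fun τ => 4 * C * E * (1 + |τ|) ^ (-(3 / 2) : ℝ)
  have hG : Integrable G := (integrable_one_add_abs_rpow (r := 3 / 2) (by norm_num)).const_mul _
  have hbd : ∀ τ : ℝ, (1 + √‖(2 + τ * I : ℂ)‖) * ‖tentKernel δ (3 / 2 - a) u τ‖ ≤ G τ := by
    intro τ
    have ht := abs_nonneg τ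
    have h1 := hC (((3 / 2 - a : ℝ) : ℂ) + τ * I) (by simp; linarith) (by simp)
    rw [norm_tentKernel]
    have h2 : √‖(2 + τ * I : ℂ)‖ ≤ 2 * (1 + |τ|) ^ (1 / 2 : ℝ) := by
      have : ‖(2 + τ * I : ℂ)‖ ≤ 4 * (1 + |τ|) := by
        refine (norm_add_le _ _).trans ?_
        rw [norm_mul, norm_I, Complex.norm_real, Real.norm_eq_abs]
        simp
        linarith
      refine (Real.sqrt_le_sqrt this).trans ?_
      rw [Real.sqrt_mul (by norm_num), ← Real.sqrt_eq_rpow,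
        show (4 : ℝ) = 2 ^ 2 by norm_num, Real.sqrt_sq (by norm_num)]
    have h3 : (1 : ℝ) ≤ (1 + |τ|) ^ (1 / 2 : ℝ) := Real.one_le_rpow (by linarith) (by norm_num)
    have h4 : (1 + |τ|) ^ (-(3 / 2) : ℝ) = (1 + |τ|) ^ (1 / 2 : ℝ) * (1 + |τ|) ^ (-2 : ℝ) := by
      rw [← Real.rpow_add (by linarith)]
      norm_num
    simp only [Complex.add_im, Complex.ofReal_im, Complex.mul_im, Complex.ofReal_re, Complex.I_im,
      mul_one, Complex.I_re, mul_zero, add_zero, zero_add] at h1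
    simp only [G]
    rw [h4]
    calc _ ≤ (4 * (1 + |τ|) ^ (1 / 2 : ℝ)) * (C * (1 + |τ|) ^ (-2 : ℝ) * E) := by
          gcongr
          linarith
      _ = _ := by ring
  have hterm : ∀ (n : ℕ) (τ : ℝ), ‖archTerm (2 + τ * I) n * tentKernel δ (3 / 2 - a) u τ‖ ≤
      1 / (n + 1 : ℝ) ^ (3 / 2 : ℝ) * G τ := by
    intro n τ
    rw [norm_mul]
    have h1 := norm_archTerm_le (z := 2 + τ * I) (by simp) n
    have h2 := mul_le_mul_of_nonneg_right h1 (norm_nonneg (tentKernel δ (3 / 2 - a) u τ))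
    refine h2.trans ?_
    have h3 : 0 ≤ 1 / (n + 1 : ℝ) ^ (3 / 2 : ℝ) := by positivity
    have := mul_le_mul_of_nonneg_left (hbd τ) h3
    linarith
  have hcontn : ∀ n : ℕ, Continuous fun τ : ℝ => archTerm (2 + τ * I) n := by
    intro n
    unfold archTerm
    refine continuous_const.sub (continuous_const.div (by fun_prop) fun τ h => ?_)
    have := congrArg Complex.re h
    simp at this
    have h0 : (0 : ℝ) ≤ n := by positivity
    linarith
  have hIn : ∀ n : ℕ, Integrable fun τ : ℝ =>
      archTerm (2 + τ * I) n * tentKernel δ (3 / 2 - a) u τ := fun n =>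
    (hG.const_mul _).mono' ((hcontn n).mul (continuous_tentKernel _ _ _)).aestronglyMeasurable
      (Filter.Eventually.of_forall (hterm n))
  have hsum : Summable fun n : ℕ => ∫ τ : ℝ,
      ‖archTerm (2 + τ * I) n * tentKernel δ (3 / 2 - a) u τ‖ := by
    refine Summable.of_nonneg_of_le (fun n => integral_nonneg fun τ => norm_nonneg _)
      (fun n => ?_) (summable_one_div_succ_rpow.mul_right (∫ τ, G τ))
    rw [← MeasureTheory.integral_const_mul]
    exact integral_mono (hIn n).norm (hG.const_mul _) (hterm n)
  have h := hasSum_integral_of_summable_integral_norm hIn hsum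
  simp_rw [tsum_mul_right, integral_archTerm_mul_tentKernel hδ ha1] at h
  refine ⟨?_, h⟩
  have hS : ∀ τ : ℝ, ‖∑' n, archTerm (2 + τ * I) n‖ ≤
      (1 + √‖(2 + τ * I : ℂ)‖) * ∑' n : ℕ, 1 / (n + 1 : ℝ) ^ (3 / 2 : ℝ) := fun τ =>
    tsum_of_norm_bounded (summable_one_div_succ_rpow.hasSum.mul_left _)
      (norm_archTerm_le (by simp))
  have hmeas : AEStronglyMeasurable (fun τ : ℝ => ∑' n, archTerm (2 + τ * I) n) volume := by
    refine (Measurable.aestronglyMeasurable ?_)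
    exact Measurable.tsum (fun n => (hcontn n).measurable)
  refine (hG.const_mul (∑' n : ℕ, 1 / (n + 1 : ℝ) ^ (3 / 2 : ℝ))).mono'
    (hmeas.mul (continuous_tentKernel _ _ _).aestronglyMeasurable)
    (Eventually.of_forall fun τ => ?_)
  rw [norm_mul]
  have h2 := mul_le_mul_of_nonneg_right (hS τ) (norm_nonneg (tentKernel δ (3 / 2 - a) u τ))
  refine h2.trans ?_
  have h3 : 0 ≤ ∑' n : ℕ, 1 / (n + 1 : ℝ) ^ (3 / 2 : ℝ) := tsum_nonneg fun n => by positivity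
  have := mul_le_mul_of_nonneg_left (hbd τ) h3
  linarith

/-- The `n`-th archimedean contribution to the explicit formula. -/
noncomputable def archPart (a δ u : ℝ) (n : ℕ) : ℝ :=
  Real.log (1 + 1 / (n + 1 : ℝ)) / 2 * tent δ u - expTent δ (2 * (n + 1) + 1 / 2 + a) u

/-- The `n`-th contribution of the prime powers to the explicit formula. -/
noncomputable def primePart (a δ u : ℝ) (n : ℕ) : ℝ :=
  ArithmeticFunction.vonMangoldt n * (n : ℝ) ^ (-(1 / 2 + a)) * tent δ (u - Real.log n)

/-- The positive-definite functional of the explicit formula. -/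
noncomputable def weilV (a δ u : ℝ) : ℝ :=
  expTent δ (a - 1 / 2) u - Real.log Real.pi / 2 * tent δ u + (∑' n, archPart a δ u n) -
    ∑' n, primePart a δ u n

theorem term_mul_tentKernel (a δ u τ : ℝ) (n : ℕ) :
    LSeries.term (fun n => (ArithmeticFunction.vonMangoldt n : ℂ)) (2 + τ * I) n *
        tentKernel δ (3 / 2 - a) u τ =
      ((ArithmeticFunction.vonMangoldt n * (n : ℝ) ^ (-(1 / 2 + a)) : ℝ) : ℂ) *
        tentKernel δ (3 / 2 - a) (u - Real.log n) τ := by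
  rcases Nat.eq_zero_or_pos n with rfl | hn
  · simp
  have hn' : (0 : ℝ) < n := by exact_mod_cast hn
  rw [LSeries.term_of_ne_zero hn.ne', tentKernel, tentKernel, Complex.ofReal_mul,
    Real.rpow_def_of_pos hn', Complex.cpow_def_of_ne_zero (by exact_mod_cast hn.ne'),
    ← Complex.ofReal_natCast n, ← Complex.ofReal_log hn'.le, div_eq_mul_inv, ← Complex.exp_neg,
    Complex.ofReal_exp]
  have e : Complex.exp (-(((Real.log n : ℝ) : ℂ) * (2 + τ * I))) *
      Complex.exp (u * (((3 / 2 - a : ℝ) : ℂ) + τ * I)) =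
      Complex.exp ((Real.log n * -(1 / 2 + a) : ℝ) : ℂ) *
      Complex.exp (((u - Real.log n : ℝ) : ℂ) * (((3 / 2 - a : ℝ) : ℂ) + τ * I)) := by
    rw [← Complex.exp_add, ← Complex.exp_add]
    congr 1
    push_cast
    ring
  linear_combination ((ArithmeticFunction.vonMangoldt n : ℝ) : ℂ) *
    tentLaplace δ (((3 / 2 - a : ℝ) : ℂ) + τ * I) * e

theorem hasSum_integral_prime {δ : ℝ} (hδ : 0 < δ) {a : ℝ} (ha1 : a < 3 / 2) (u : ℝ) :
    Integrable (fun τ : ℝ => LSeries (fun n => (ArithmeticFunction.vonMangoldt n : ℂ)) (2 + τ * I) *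
      tentKernel δ (3 / 2 - a) u τ) ∧
    HasSum (fun n : ℕ => 2 * Real.pi * ((primePart a δ u n : ℝ) : ℂ))
      (∫ τ : ℝ, LSeries (fun n => (ArithmeticFunction.vonMangoldt n : ℂ)) (2 + τ * I) *
        tentKernel δ (3 / 2 - a) u τ) := by
  have hβ : 0 < 3 / 2 - a := by linarith
  have hK := integrable_tentKernel δ hβ.le
  set f : ℕ → ℂ := fun n => (ArithmeticFunction.vonMangoldt n : ℂ)
  have hs := (hasSum_vonMangoldt (z := 2) (by simp)).norm
  have hIn : ∀ n : ℕ, Integrable fun τ : ℝ =>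
      LSeries.term f (2 + τ * I) n * tentKernel δ (3 / 2 - a) u τ := by
    intro n
    simp_rw [f, term_mul_tentKernel]
    exact (hK _).const_mul _
  have hterm : ∀ (n : ℕ) (τ : ℝ), ‖LSeries.term f (2 + τ * I) n‖ ≤ ‖LSeries.term f 2 n‖ := fun n τ =>
    LSeries.norm_term_le_of_re_le_re _ (by simp) n
  have hsum : Summable fun n : ℕ => ∫ τ : ℝ,
      ‖LSeries.term f (2 + τ * I) n * tentKernel δ (3 / 2 - a) u τ‖ := by
    refine Summable.of_nonneg_of_le (fun n => integral_nonneg fun τ => norm_nonneg _)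
      (fun n => ?_) (hs.mul_right (∫ τ, ‖tentKernel δ (3 / 2 - a) u τ‖))
    rw [← MeasureTheory.integral_const_mul]
    refine integral_mono (hIn n).norm ((hK u).norm.const_mul _) fun τ => ?_
    simp only [norm_mul]
    exact mul_le_mul_of_nonneg_right (hterm n τ) (norm_nonneg _)
  have h := hasSum_integral_of_summable_integral_norm hIn hsum
  simp_rw [tsum_mul_right] at h
  constructor
  · obtain ⟨C, hC0, hC⟩ := exists_norm_LSeries_vonMangoldt_le
    have hcont : Continuous fun τ : ℝ => LSeries f (2 + τ * I) := by
      have hd : DifferentiableOn ℂ (LSeries f) {z | 1 < z.re} := by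
        refine (LSeries_differentiableOn f).mono fun z hz => ?_
        refine lt_of_le_of_lt ?_ (show ((1 : ℝ) : EReal) < z.re by exact_mod_cast hz)
        refine LSeries.abscissaOfAbsConv_le_of_forall_lt_LSeriesSummable fun y hy => ?_
        exact hasSum_vonMangoldt (by simpa using hy)
      exact hd.continuousOn.comp_continuous (by fun_prop) fun τ => by simp
    refine ((hK u).norm.const_mul C).mono'
      (hcont.mul (continuous_tentKernel _ _ _)).aestronglyMeasurable
      (Eventually.of_forall fun τ => ?_)
    rw [norm_mul]
    exact mul_le_mul_of_nonneg_right (hC _ (by simp)) (norm_nonneg _)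
  · refine h.congr_fun ?_
    intro n
    simp_rw [f, term_mul_tentKernel]
    rw [MeasureTheory.integral_const_mul, integral_tentKernel hδ hβ, primePart]
    push_cast
    ring

theorem summable_archPart {δ : ℝ} (hδ : 0 < δ) {a : ℝ} (ha1 : a < 3 / 2) (u : ℝ) :
    Summable (archPart a δ u) := by
  have h := (hasSum_integral_arch hδ ha1 u).2.summable
  have hpi : (2 * Real.pi : ℂ) ≠ 0 := by
    simp [Real.pi_ne_zero]
  rw [summable_mul_left_iff hpi] at h
  exact Complex.summable_ofReal.mp h

theorem summable_primePart {δ : ℝ} (hδ : 0 < δ) {a : ℝ} (ha1 : a < 3 / 2) (u : ℝ) :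
    Summable (primePart a δ u) := by
  have h := (hasSum_integral_prime hδ ha1 u).2.summable
  have hpi : (2 * Real.pi : ℂ) ≠ 0 := by
    simp [Real.pi_ne_zero]
  rw [summable_mul_left_iff hpi] at h
  exact Complex.summable_ofReal.mp h

theorem integral_logDeriv_right {δ : ℝ} (hδ : 0 < δ) {a : ℝ} (ha1 : a < 3 / 2) (u : ℝ) :
    ∫ τ : ℝ, logDeriv bigXi (2 + τ * I) * tentKernel δ (3 / 2 - a) u τ =
      2 * Real.pi * (weilV a δ u : ℝ) := by
  have hβ : 0 < 3 / 2 - a := by linarith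
  have hK := integrable_tentKernel δ hβ.le u
  obtain ⟨hA, hAs⟩ := hasSum_integral_arch hδ ha1 u
  obtain ⟨hL, hLs⟩ := hasSum_integral_prime hδ ha1 u
  have hpole : ∀ τ : ℝ, tentKernel δ (3 / 2 - a) u τ /
      ((((3 / 2 - a : ℝ) : ℂ) + τ * I) + ((a - 1 / 2 : ℝ) : ℂ)) =
      1 / ((2 + τ * I) - 1) * tentKernel δ (3 / 2 - a) u τ := by
    intro τ
    rw [one_div_mul_eq_div]
    congr 1
    push_cast
    ring
  have hP : Integrable fun τ : ℝ => 1 / ((2 + τ * I) - 1) * tentKernel δ (3 / 2 - a) u τ := by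
    have hre : ∀ τ : ℝ, ((2 + τ * I : ℂ) - 1).re = 1 := by
      intro τ
      simp
      norm_num
    have hne : ∀ τ : ℝ, ((2 + τ * I : ℂ) - 1) ≠ 0 := by
      intro τ h
      have := hre τ
      rw [h] at this
      simp at this
    refine hK.norm.mono' (Continuous.aestronglyMeasurable ?_) (Eventually.of_forall fun τ => ?_)
    · exact (continuous_const.div (by fun_prop) hne).mul (continuous_tentKernel _ _ _)
    · rw [norm_mul, norm_div, norm_one]
      refine mul_le_of_le_one_left (norm_nonneg _) ?_
      rw [div_le_one (norm_pos_iff.mpr (hne τ)), ← hre τ]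
      exact Complex.re_le_norm _
  have e : ∀ τ : ℝ, logDeriv bigXi (2 + τ * I) * tentKernel δ (3 / 2 - a) u τ =
      1 / ((2 + τ * I) - 1) * tentKernel δ (3 / 2 - a) u τ -
      ((Real.log Real.pi / 2 : ℝ) : ℂ) * tentKernel δ (3 / 2 - a) u τ +
      (∑' n, archTerm (2 + τ * I) n) * tentKernel δ (3 / 2 - a) u τ -
      LSeries (fun n => (ArithmeticFunction.vonMangoldt n : ℂ)) (2 + τ * I) *
        tentKernel δ (3 / 2 - a) u τ := by
    intro τ
    rw [logDeriv_bigXi' (by simp)]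
    ring
  simp_rw [e]
  have hPK := hP.sub (hK.const_mul ((Real.log Real.pi / 2 : ℝ) : ℂ))
  have hPKA := hPK.add hA
  simp only [Pi.sub_def, Pi.add_def] at hPK hPKA
  rw [integral_sub hPKA hL, integral_add hPK hA, integral_sub hP (hK.const_mul _),
    MeasureTheory.integral_const_mul, integral_tentKernel hδ hβ, ← hAs.tsum_eq, ← hLs.tsum_eq,
    tsum_mul_left, tsum_mul_left]
  simp_rw [← hpole]
  rw [integral_tentKernel_div hδ hβ (by linarith), weilV]
  have h1 : (∑' n : ℕ, ((Real.log (1 + 1 / (n + 1 : ℝ)) / 2 * tent δ u -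
      expTent δ (2 * (n + 1) + 1 / 2 + a) u : ℝ) : ℂ)) = ((∑' n, archPart a δ u n : ℝ) : ℂ) := by
    rw [Complex.ofReal_tsum]
    rfl
  rw [h1, ← Complex.ofReal_tsum]
  push_cast
  ring

theorem differentiableOn_logDeriv_bigXi (hRH : RiemannHypothesis) {a : ℝ} (ha : 0 < a) :
    DifferentiableOn ℂ (fun s => logDeriv bigXi (1 / 2 + a + s)) {s | 0 ≤ s.re} := by
  intro s hs
  have hne : bigXi (1 / 2 + a + s) ≠ 0 := by
    refine bigXi_ne_zero hRH ?_
    simp only [Set.mem_ofPred_eq] at hs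
    simp
    linarith
  have h1 : DifferentiableAt ℂ (deriv bigXi) (1 / 2 + a + s) :=
    (differentiable_bigXi.contDiff (n := 2)).differentiable_deriv_two _
  have h2 : DifferentiableAt ℂ (logDeriv bigXi) (1 / 2 + a + s) := by
    unfold logDeriv
    exact h1.div differentiable_bigXi.differentiableAt hne
  have h3 : DifferentiableAt ℂ (fun s : ℂ => 1 / 2 + (a : ℂ) + s) s := by fun_prop
  exact (h2.comp s h3).differentiableWithinAt

theorem exists_norm_logDeriv_mul_tentLaplace_le (hRH : RiemannHypothesis) (δ : ℝ) {a : ℝ}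
    (ha : 0 < a) (u : ℝ) : ∃ C : ℝ, ∀ s : ℂ, 0 ≤ s.re → s.re ≤ 3 / 2 - a →
      ‖logDeriv bigXi (1 / 2 + a + s) * (tentLaplace δ s * Complex.exp (u * s))‖ ≤
        C * (1 + |s.im|) ^ (-(3 / 2) : ℝ) := by
  obtain ⟨C₁, hC₁, h₁⟩ := exists_norm_logDeriv_bigXi_le_sqrt hRH ha
  obtain ⟨C₂, hC₂, h₂⟩ := exists_norm_tentLaplace_le δ (3 / 2 - a)
  refine ⟨C₁ * C₂ * Real.exp (|u| * (3 / 2 - a)), fun s hs0 hs1 => ?_⟩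
  have h3 := h₁ (1 / 2 + a + s) (by simp; linarith) (by simp; linarith)
  have h4 := h₂ s hs0 hs1
  have h5 : ‖Complex.exp (u * s)‖ ≤ Real.exp (|u| * (3 / 2 - a)) := by
    rw [Complex.norm_exp]
    refine Real.exp_le_exp.mpr ?_
    simp only [Complex.mul_re, Complex.ofReal_re, Complex.ofReal_im, zero_mul, sub_zero]
    calc u * s.re ≤ |u| * s.re := mul_le_mul_of_nonneg_right (le_abs_self u) hs0
      _ ≤ _ := mul_le_mul_of_nonneg_left hs1 (abs_nonneg u)
  have him : (1 / 2 + (a : ℂ) + s).im = s.im := by simp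
  rw [him] at h3
  have ht := abs_nonneg s.im
  have h6 : (1 + |s.im|) ^ (-(3 / 2) : ℝ) = (1 + |s.im|) ^ (1 / 2 : ℝ) * (1 + |s.im|) ^ (-2 : ℝ) := by
    rw [← Real.rpow_add (by linarith)]
    norm_num
  rw [norm_mul, norm_mul, h6]
  calc _ ≤ (C₁ * (1 + |s.im|) ^ (1 / 2 : ℝ)) * ((C₂ * (1 + |s.im|) ^ (-2 : ℝ)) *
        Real.exp (|u| * (3 / 2 - a))) := by gcongr
    _ = _ := by ring

theorem integral_logDeriv_left (hRH : RiemannHypothesis) {δ : ℝ} (hδ : 0 < δ) {a : ℝ}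
    (ha : 0 < a) (ha1 : a < 3 / 2) (u : ℝ) :
    Integrable (fun τ : ℝ => logDeriv bigXi (1 / 2 + a + τ * I) *
      (tentLaplace δ (τ * I) * Complex.exp (u * (τ * I)))) ∧
    ∫ τ : ℝ, logDeriv bigXi (1 / 2 + a + τ * I) *
      (tentLaplace δ (τ * I) * Complex.exp (u * (τ * I))) = 2 * Real.pi * (weilV a δ u : ℝ) := by
  obtain ⟨C, hC⟩ := exists_norm_logDeriv_mul_tentLaplace_le hRH δ ha u
  have hd : DifferentiableOn ℂ (fun s => logDeriv bigXi (1 / 2 + a + s) *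
      (tentLaplace δ s * Complex.exp (u * s))) {s | 0 ≤ s.re} := by
    refine (differentiableOn_logDeriv_bigXi hRH ha).mul (Differentiable.differentiableOn ?_)
    have := differentiable_tentLaplace δ
    fun_prop
  constructor
  · refine Integrable.mono' ((integrable_one_add_abs_rpow (r := 3 / 2) (by norm_num)).const_mul C)
      ?_ (Eventually.of_forall fun τ => ?_)
    · refine Continuous.aestronglyMeasurable ?_
      exact hd.continuousOn.comp_continuous (f := fun τ : ℝ => (τ : ℂ) * I) (by fun_prop)
        fun τ => by simp
    · simpa using hC (τ * I) (by simp) (by simpa using ha1.le)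
  · rw [integral_vertical_eq (f := fun s => logDeriv bigXi (1 / 2 + a + s) *
      (tentLaplace δ s * Complex.exp (u * s))) (β := 3 / 2 - a) (by linarith) hd hC,
      ← integral_logDeriv_right hδ ha1 u]
    congr 1
    funext τ
    rw [tentKernel]
    congr 2
    push_cast
    ring

/-- Under the Riemann hypothesis the functional `weilV` is positive semidefinite. -/
theorem weilV_posSemidef (hRH : RiemannHypothesis) {δ : ℝ} (hδ : 0 < δ) {a : ℝ} (ha : 0 < a)
    (ha1 : a < 3 / 2) {ι : Type*} (s : Finset ι) (c u : ι → ℝ) :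
    0 ≤ ∑ i ∈ s, ∑ j ∈ s, c i * c j * weilV a δ (u i - u j) := by
  have hI := fun v => (integral_logDeriv_left hRH hδ ha ha1 v).1
  have hE := fun v => (integral_logDeriv_left hRH hδ ha ha1 v).2
  have h1 : ((2 * Real.pi * ∑ i ∈ s, ∑ j ∈ s, c i * c j * weilV a δ (u i - u j) : ℝ) : ℂ) =
      ∫ τ : ℝ, ∑ i ∈ s, ∑ j ∈ s, ((c i * c j : ℝ) : ℂ) * (logDeriv bigXi (1 / 2 + a + τ * I) *
      (tentLaplace δ (τ * I) * Complex.exp (((u i - u j : ℝ) : ℂ) * (τ * I)))) := by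
    rw [integral_finsetSum _ fun i _ => integrable_finsetSum _ fun j _ => (hI _).const_mul _]
    simp_rw [integral_finsetSum _ fun j _ => (hI _).const_mul _, MeasureTheory.integral_const_mul,
      hE]
    push_cast
    rw [Finset.mul_sum]
    refine Finset.sum_congr rfl fun i _ => ?_
    rw [Finset.mul_sum]
    refine Finset.sum_congr rfl fun j _ => ?_
    ring
  have h2 : ∀ τ : ℝ, ∑ i ∈ s, ∑ j ∈ s, ((c i * c j : ℝ) : ℂ) *
      (logDeriv bigXi (1 / 2 + a + τ * I) *
      (tentLaplace δ (τ * I) * Complex.exp (((u i - u j : ℝ) : ℂ) * (τ * I)))) =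
      logDeriv bigXi (1 / 2 + a + τ * I) * (tentLaplace δ (τ * I) *
        ((‖∑ i ∈ s, (c i : ℂ) * Complex.exp (u i * τ * I)‖ ^ 2 : ℝ) : ℂ)) := by
    intro τ
    rw [← Complex.normSq_eq_norm_sq, ← Complex.mul_conj, map_sum, Finset.sum_mul_sum,
      Finset.mul_sum, Finset.mul_sum]
    refine Finset.sum_congr rfl fun i _ => ?_
    rw [Finset.mul_sum, Finset.mul_sum]
    refine Finset.sum_congr rfl fun j _ => ?_
    rw [map_mul, ← Complex.exp_conj]
    have : Complex.exp (((u i - u j : ℝ) : ℂ) * (τ * I)) = Complex.exp (u i * τ * I) *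
        Complex.exp ((starRingEnd ℂ) (u j * τ * I)) := by
      rw [← Complex.exp_add]
      congr 1
      simp
      ring
    rw [this]
    simp
    ring
  simp_rw [h2] at h1
  have hinteg : Integrable fun τ : ℝ => logDeriv bigXi (1 / 2 + a + τ * I) * (tentLaplace δ (τ * I) *
        ((‖∑ i ∈ s, (c i : ℂ) * Complex.exp (u i * τ * I)‖ ^ 2 : ℝ) : ℂ)) := by
    simp_rw [← h2]
    exact integrable_finsetSum _ fun i _ => integrable_finsetSum _ fun j _ => (hI _).const_mul _
  have h3 : 2 * Real.pi * ∑ i ∈ s, ∑ j ∈ s, c i * c j * weilV a δ (u i - u j) =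
      ∫ τ : ℝ, (logDeriv bigXi (1 / 2 + a + τ * I) * (tentLaplace δ (τ * I) *
        ((‖∑ i ∈ s, (c i : ℂ) * Complex.exp (u i * τ * I)‖ ^ 2 : ℝ) : ℂ))).re := by
    have := integral_re (𝕜 := ℂ) hinteg
    simp only [RCLike.re_eq_complex_re] at this
    rw [this, ← h1, Complex.ofReal_re]
  have h4 : 0 ≤ 2 * Real.pi * ∑ i ∈ s, ∑ j ∈ s, c i * c j * weilV a δ (u i - u j) := by
    rw [h3]
    refine integral_nonneg fun τ => ?_
    obtain ⟨r, hr, hr'⟩ := tentLaplace_mul_I δ τ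
    simp only [Pi.zero_apply]
    rw [hr', ← Complex.ofReal_mul, Complex.re_mul_ofReal]
    refine mul_nonneg (re_logDeriv_bigXi_nonneg hRH ?_) (by positivity)
    simp
    linarith
  exact nonneg_of_mul_nonneg_right h4 (by positivity)

/-- The even part of `weilV`, doubled. -/
noncomputable def weilW (a δ u : ℝ) : ℝ := weilV a δ u + weilV a δ (-u)

theorem weilW_neg (a δ u : ℝ) : weilW a δ (-u) = weilW a δ u := by
  rw [weilW, weilW, neg_neg, add_comm]

theorem weilW_posSemidef (hRH : RiemannHypothesis) {δ : ℝ} (hδ : 0 < δ) {a : ℝ} (ha : 0 < a)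
    (ha1 : a < 3 / 2) {ι : Type*} (s : Finset ι) (c u : ι → ℝ) :
    0 ≤ ∑ i ∈ s, ∑ j ∈ s, c i * c j * weilW a δ (u i - u j) := by
  have h1 := weilV_posSemidef hRH hδ ha ha1 s c u
  have h2 := weilV_posSemidef hRH hδ ha ha1 s c fun i => -u i
  refine (add_nonneg h1 h2).trans_eq ?_
  rw [← Finset.sum_add_distrib]
  refine Finset.sum_congr rfl fun i _ => ?_
  rw [← Finset.sum_add_distrib]
  refine Finset.sum_congr rfl fun j _ => ?_
  rw [weilW, neg_sub_neg, neg_sub]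
  ring

theorem integrable_exp_mul_tent (δ κ u : ℝ) :
    Integrable fun v : ℝ => Real.exp (-(κ * v)) * tent δ (u - v) := by
  refine Continuous.integrable_of_hasCompactSupport ?_ ?_
  · have := continuous_tent δ
    fun_prop
  · refine HasCompactSupport.intro (isCompact_Icc (a := u - δ) (b := u + δ)) fun x hx => ?_
    rw [tent_eq_zero, mul_zero]
    by_contra! h
    rw [abs_lt] at h
    exact hx (Set.mem_Icc.mpr ⟨by linarith, by linarith⟩)

theorem integral_exp_mul_sub {κ : ℝ} (hκ : κ ≠ 0) (δ : ℝ) :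
    ∫ v in (0 : ℝ)..δ, Real.exp (-(κ * v)) * (δ - v) =
      δ / κ - 1 / κ ^ 2 + Real.exp (-(κ * δ)) / κ ^ 2 := by
  have h : ∀ v ∈ Set.uIcc 0 δ, HasDerivAt
      (fun v : ℝ => Real.exp (-(κ * v)) * (1 / κ ^ 2 - (δ - v) / κ))
      (Real.exp (-(κ * v)) * (δ - v)) v := by
    intro v _
    have h1 : HasDerivAt (fun v : ℝ => Real.exp (-(κ * v))) (Real.exp (-(κ * v)) * -(κ * 1)) v :=
      (((hasDerivAt_id v).const_mul κ).neg).exp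
    have h2 : HasDerivAt (fun v : ℝ => 1 / κ ^ 2 - (δ - v) / κ) (-(-1 / κ)) v :=
      (((hasDerivAt_id v).const_sub δ).div_const κ).const_sub _
    refine (h1.mul h2).congr_deriv ?_
    field_simp
    ring
  rw [intervalIntegral.integral_eq_sub_of_hasDerivAt h
    (Continuous.intervalIntegrable (by fun_prop) _ _)]
  simp
  field_simp
  ring

theorem setIntegral_tent {δ : ℝ} (hδ : 0 ≤ δ) :
    ∫ v in Set.Ioi (0 : ℝ), tent δ v = δ ^ 2 / 2 := by
  have h1 : ∫ v in Set.Ioi (0 : ℝ), tent δ v = ∫ v in Set.Ioc 0 δ, tent δ v := by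
    refine setIntegral_eq_of_subset_of_forall_sdiff_eq_zero measurableSet_Ioi
      (fun v hv => hv.1) fun v hv => tent_eq_zero ?_
    have h0 : 0 < v := hv.1
    rw [abs_of_pos h0]
    by_contra! h
    exact hv.2 ⟨h0, h.le⟩
  have h2 : ∫ v in Set.Ioc 0 δ, tent δ v = ∫ v in (0 : ℝ)..δ, (δ - v) := by
    rw [intervalIntegral.integral_of_le hδ]
    refine setIntegral_congr_fun measurableSet_Ioc fun v hv => ?_
    simp only [tent, abs_of_pos hv.1]
    exact max_eq_left (by linarith [hv.2])
  rw [h1, h2]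
  rw [intervalIntegral.integral_sub (by simp) (by simp), intervalIntegral.integral_const, integral_id,
    smul_eq_mul]
  ring

theorem integral_tent {δ : ℝ} (hδ : 0 ≤ δ) : ∫ v, tent δ v = δ ^ 2 := by
  have h := integral_comp_abs (f := tent δ)
  have e : (fun x => tent δ |x|) = tent δ := by
    funext x
    simp [tent]
  rw [setIntegral_tent hδ, e] at h
  rw [h]
  ring

theorem setIntegral_tent_sub {δ u : ℝ} (hδ : 0 ≤ δ) (hu : δ ≤ u) :
    ∫ v in Set.Ioi (0 : ℝ), tent δ (u - v) = δ ^ 2 := by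
  rw [← integral_tent hδ, ← integral_sub_left_eq_self (tent δ) volume u]
  refine setIntegral_eq_integral_of_forall_compl_eq_zero fun v hv => tent_eq_zero ?_
  have : v ≤ 0 := by simpa using hv
  rw [abs_of_nonneg] <;> linarith

theorem expTent_nonneg (δ κ u : ℝ) : 0 ≤ expTent δ κ u :=
  setIntegral_nonneg measurableSet_Ioi fun _ _ => mul_nonneg (Real.exp_pos _).le (tent_nonneg _ _)

theorem expTent_eq_zero {δ u : ℝ} (κ : ℝ) (hu : u ≤ -δ) : expTent δ κ u = 0 := by
  rw [expTent]
  refine setIntegral_eq_zero_of_forall_eq_zero fun v hv => ?_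
  have : (0 : ℝ) < v := hv
  rw [tent_eq_zero, mul_zero]
  rw [abs_sub_comm]
  exact le_trans (by linarith) (le_abs_self _)

theorem integrable_tent_sub (δ u : ℝ) : Integrable fun v : ℝ => tent δ (u - v) := by
  simpa using integrable_exp_mul_tent δ 0 u

theorem expTent_le {δ κ u E : ℝ} (hδ : 0 ≤ δ) (hu : δ ≤ u)
    (hE : ∀ v, |u - v| ≤ δ → Real.exp (-(κ * v)) ≤ E) : expTent δ κ u ≤ E * δ ^ 2 := by
  rw [← setIntegral_tent_sub hδ hu, ← MeasureTheory.integral_const_mul]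
  refine setIntegral_mono (integrable_exp_mul_tent δ κ u).integrableOn
    ((integrable_tent_sub δ u).const_mul E).integrableOn fun v => ?_
  rcases le_total |u - v| δ with h | h
  · exact mul_le_mul_of_nonneg_right (hE v h) (tent_nonneg _ _)
  · simp [tent_eq_zero h]

theorem le_expTent {δ κ u E : ℝ} (hδ : 0 ≤ δ) (hu : δ ≤ u)
    (hE : ∀ v, |u - v| ≤ δ → E ≤ Real.exp (-(κ * v))) : E * δ ^ 2 ≤ expTent δ κ u := by
  rw [← setIntegral_tent_sub hδ hu, ← MeasureTheory.integral_const_mul]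
  refine setIntegral_mono ((integrable_tent_sub δ u).const_mul E).integrableOn
    (integrable_exp_mul_tent δ κ u).integrableOn fun v => ?_
  rcases le_total |u - v| δ with h | h
  · exact mul_le_mul_of_nonneg_right (hE v h) (tent_nonneg _ _)
  · simp [tent_eq_zero h]

theorem expTent_zero_le {δ κ : ℝ} (hδ : 0 ≤ δ) (hκ : -(1 / 2) ≤ κ) :
    expTent δ κ 0 ≤ Real.exp (δ / 2) * (δ ^ 2 / 2) := by
  rw [← setIntegral_tent hδ, ← MeasureTheory.integral_const_mul, expTent]
  refine setIntegral_mono_on (integrable_exp_mul_tent δ κ 0).integrableOn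
    (Integrable.integrableOn ?_) measurableSet_Ioi fun v hv => ?_
  · simpa using (integrable_tent_sub δ 0).comp_neg.const_mul (Real.exp (δ / 2))
  have hv0 : (0 : ℝ) < v := hv
  rw [zero_sub, tent_neg]
  rcases le_total |v| δ with h | h
  · refine mul_le_mul_of_nonneg_right (Real.exp_le_exp.mpr ?_) (tent_nonneg _ _)
    rw [abs_of_pos hv0] at h
    nlinarith
  · simp [tent_eq_zero h]

theorem le_expTent_zero {δ κ : ℝ} (hδ : 0 ≤ δ) (hκ : 0 < κ) :
    δ / κ - 1 / κ ^ 2 ≤ expTent δ κ 0 := by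
  have h1 : ∫ v in Set.Ioc 0 δ, Real.exp (-(κ * v)) * tent δ (0 - v) ≤ expTent δ κ 0 :=
    setIntegral_mono_set (integrable_exp_mul_tent δ κ 0).integrableOn
      (Filter.Eventually.of_forall fun v => mul_nonneg (Real.exp_pos _).le (tent_nonneg _ _))
      (LE.le.eventuallyLE fun v hv => hv.1)
  have h2 : ∫ v in Set.Ioc 0 δ, Real.exp (-(κ * v)) * tent δ (0 - v) =
      ∫ v in (0 : ℝ)..δ, Real.exp (-(κ * v)) * (δ - v) := by
    rw [intervalIntegral.integral_of_le hδ]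
    refine setIntegral_congr_fun measurableSet_Ioc fun v hv => ?_
    simp only [tent, zero_sub, abs_neg, abs_of_pos hv.1]
    rw [max_eq_left (by linarith [hv.2])]
  rw [h2, integral_exp_mul_sub hκ.ne'] at h1
  have : 0 ≤ Real.exp (-(κ * δ)) / κ ^ 2 := by positivity
  linarith

theorem primePart_nonneg (a δ u : ℝ) (n : ℕ) : 0 ≤ primePart a δ u n :=
  mul_nonneg (mul_nonneg ArithmeticFunction.vonMangoldt_nonneg (Real.rpow_nonneg n.cast_nonneg _))
    (tent_nonneg _ _)

theorem archPart_eq {a δ u : ℝ} (hu : δ ≤ |u|) (n : ℕ) :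
    archPart a δ u n = -expTent δ (2 * (n + 1) + 1 / 2 + a) u := by
  rw [archPart, tent_eq_zero hu]
  ring

theorem weilV_le {a δ u : ℝ} (hu : δ ≤ |u|) : weilV a δ u ≤ expTent δ (a - 1 / 2) u := by
  have h1 : ∑' n, archPart a δ u n ≤ 0 := tsum_nonpos fun n => by
    rw [archPart_eq hu]
    exact neg_nonpos.mpr (expTent_nonneg _ _ _)
  have h2 : 0 ≤ ∑' n, primePart a δ u n := tsum_nonneg fun n => primePart_nonneg a δ u n
  rw [weilV, tent_eq_zero hu]
  linarith

theorem weilV_eq_zero {a δ u : ℝ} (hδ : 0 ≤ δ) (hu : u ≤ -δ) : weilV a δ u = 0 := by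
  have habs : δ ≤ |u| := by
    rw [abs_of_nonpos] <;> linarith
  have h1 : ∀ n, archPart a δ u n = 0 := fun n => by
    rw [archPart_eq habs, expTent_eq_zero _ hu, neg_zero]
  have h2 : ∀ n, primePart a δ u n = 0 := fun n => by
    rw [primePart, tent_eq_zero, mul_zero]
    rw [abs_sub_comm]
    exact le_trans (by linarith [Real.log_natCast_nonneg n]) (le_abs_self _)
  simp [weilV, h1, h2, tent_eq_zero habs, expTent_eq_zero _ hu]

theorem weilW_le {a δ u : ℝ} (hδ : 0 ≤ δ) (ha : 0 ≤ a) (hu : δ ≤ |u|) :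
    weilW a δ u ≤ Real.exp ((|u| + δ) / 2) * δ ^ 2 := by
  have key : ∀ u : ℝ, δ ≤ u → weilW a δ u ≤ Real.exp ((u + δ) / 2) * δ ^ 2 := by
    intro u hu
    have hu0 : 0 ≤ u := hδ.trans hu
    rw [weilW, weilV_eq_zero (u := -u) hδ (by linarith), add_zero]
    refine (weilV_le (by rwa [abs_of_nonneg hu0])).trans (expTent_le hδ hu fun v hv => ?_)
    refine Real.exp_le_exp.mpr ?_
    rw [abs_le] at hv
    nlinarith
  rcases abs_cases u with ⟨h, -⟩ | ⟨h, -⟩ <;> rw [h] at hu ⊢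
  · exact key u hu
  · rw [← weilW_neg]
    exact key _ hu

theorem sum_archPart_zero_le {a δ : ℝ} (hδ : 0 ≤ δ) (ha : 0 ≤ a) (ha1 : a ≤ 1 / 2) {M : ℕ}
    (hM : 0 < M) (k : ℕ) : ∑ n ∈ Finset.range (M + k), archPart a δ 0 n ≤
      δ / 2 * Real.log (M + 1) + (1 + δ) / 4 * (1 / (M : ℝ) - 1 / (M + k : ℝ)) := by
  have ht : tent δ 0 = δ := by simp [tent, hδ]
  induction k with
  | zero =>
    have h : ∀ M : ℕ, ∑ n ∈ Finset.range M, archPart a δ 0 n ≤ δ / 2 * Real.log (M + 1) := by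
      intro M
      induction M with
      | zero => simp
      | succ m ih =>
        have hm : (0 : ℝ) ≤ m := m.cast_nonneg
        rw [Finset.sum_range_succ, archPart, ht]
        have h1 := expTent_nonneg δ (2 * (m + 1) + 1 / 2 + a) 0
        have h2 : Real.log ((m + 1 : ℕ) + 1) = Real.log (m + 1) + Real.log (1 + 1 / (m + 1 : ℝ)) := by
          rw [← Real.log_mul (by positivity) (by positivity)]
          congr 1
          push_cast
          field_simp
        rw [h2]
        nlinarith
    simpa using h M
  | succ k ih =>
    have hM' : (1 : ℝ) ≤ M := by exact_mod_cast hM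
    have hk : (0 : ℝ) ≤ k := k.cast_nonneg
    rw [← add_assoc, Finset.sum_range_succ, archPart, ht]
    push_cast
    set N : ℝ := M + k
    have hN : 1 ≤ N := by simp only [N]; linarith
    have e : (M : ℝ) + (k + 1) = N + 1 := by simp only [N]; ring
    rw [e]
    set κ : ℝ := 2 * (N + 1) + 1 / 2 + a
    have hκ : 2 * (N + 1) ≤ κ := by simp only [κ]; linarith
    have hκ' : κ ≤ 2 * (N + 1) + 1 := by simp only [κ]; linarith
    have h1 := le_expTent_zero (κ := κ) hδ (by linarith)
    have h2 : Real.log (1 + 1 / (N + 1)) ≤ 1 / (N + 1) := by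
      have := Real.log_le_sub_one_of_pos (x := 1 + 1 / (N + 1)) (by positivity)
      linarith
    have h3 : 1 / (2 * (N + 1)) - 1 / κ ≤ 1 / 4 * (1 / N - 1 / (N + 1)) := by
      rw [div_sub_div _ _ (by positivity) (by linarith), div_sub_div _ _ (by positivity)
        (by positivity), ← mul_div_assoc, div_le_div_iff₀ (by nlinarith) (by positivity)]
      nlinarith [mul_pos (show 0 < N by linarith) (show 0 < N + 1 by linarith)]
    have h4 : 1 / κ ^ 2 ≤ 1 / 4 * (1 / N - 1 / (N + 1)) := by
      have : 1 / κ ^ 2 ≤ 1 / (2 * (N + 1)) ^ 2 := by gcongr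
      refine this.trans ?_
      rw [div_sub_div _ _ (by positivity) (by positivity), ← mul_div_assoc,
        div_le_div_iff₀ (by positivity) (by positivity)]
      nlinarith
    have h5 : Real.log (1 + 1 / (N + 1)) / 2 * δ ≤ 1 / (2 * (N + 1)) * δ := by
      refine mul_le_mul_of_nonneg_right ?_ hδ
      rw [show 1 / (2 * (N + 1)) = 1 / (N + 1) / 2 by field_simp]
      linarith
    have h6 := mul_le_mul_of_nonneg_left h3 hδ
    have h7 : δ / κ = δ * (1 / κ) := by ring
    rw [h7] at h1
    linarith

theorem weilW_zero_le {a δ : ℝ} (hδ : 0 < δ) (ha : 0 ≤ a) (ha1 : a ≤ 1 / 2) :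
    weilW a δ 0 ≤ δ * (δ * Real.exp (δ / 2) + Real.log (1 / δ + 2) + (1 + δ) / 2 -
      Real.log Real.pi) := by
  have ht : tent δ 0 = δ := by simp [tent, hδ.le]
  set M := ⌈1 / δ⌉₊
  have hM : 0 < M := Nat.ceil_pos.mpr (by positivity)
  have hM1 : 1 / δ ≤ M := Nat.le_ceil _
  have hM2 : (M : ℝ) < 1 / δ + 1 := Nat.ceil_lt_add_one (by positivity)
  have h1 : ∑' n, archPart a δ 0 n ≤ δ / 2 * Real.log (M + 1) + (1 + δ) / 4 * (1 / (M : ℝ)) := by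
    have h := (summable_archPart hδ (by linarith) 0).hasSum.tendsto_sum_nat (f := archPart a δ 0)
    have h' := (tendsto_add_atTop_iff_nat M).mpr h
    refine le_of_tendsto' h' fun k => ?_
    rw [add_comm]
    refine (sum_archPart_zero_le hδ.le ha ha1 hM k).trans ?_
    have : (0 : ℝ) ≤ 1 / (M + k : ℝ) := by positivity
    have : (1 + δ) / 4 * (1 / (M : ℝ) - 1 / (M + k : ℝ)) ≤ (1 + δ) / 4 * (1 / (M : ℝ)) :=
      mul_le_mul_of_nonneg_left (by linarith) (by positivity)
    linarith
  have h2 : 0 ≤ ∑' n, primePart a δ 0 n := tsum_nonneg fun n => primePart_nonneg a δ 0 n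
  have h3 := expTent_zero_le (κ := a - 1 / 2) hδ.le (by linarith)
  have h4 : 1 / (M : ℝ) ≤ δ := by
    rw [div_le_iff₀ (by exact_mod_cast hM)]
    rw [div_le_iff₀ hδ] at hM1
    linarith
  have h5 : Real.log (M + 1) ≤ Real.log (1 / δ + 2) :=
    Real.log_le_log (by positivity) (by linarith)
  have h6 : δ / 2 * Real.log (M + 1) ≤ δ / 2 * Real.log (1 / δ + 2) :=
    mul_le_mul_of_nonneg_left h5 (by positivity)
  have h7 : (1 + δ) / 4 * (1 / (M : ℝ)) ≤ (1 + δ) / 4 * δ :=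
    mul_le_mul_of_nonneg_left h4 (by positivity)
  rw [weilW, neg_zero, weilV, ht]
  linarith

theorem le_weilW {a δ u : ℝ} (hδ : 0 < δ) (ha : 0 ≤ a) (ha1 : a ≤ 1 / 2) (hu : 1 + δ ≤ u) :
    δ ^ 2 * (Real.exp ((1 / 2 - a) * (u - δ)) - 1 / 5) - ∑' n, primePart a δ u n ≤
      weilW a δ u := by
  have hu0 : δ ≤ u := by linarith
  have habs : δ ≤ |u| := hu0.trans (le_abs_self u)
  have h1 := le_expTent (κ := a - 1 / 2) (E := Real.exp ((1 / 2 - a) * (u - δ))) hδ.le hu0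
    fun v hv => Real.exp_le_exp.mpr (by
      rw [abs_le] at hv
      nlinarith)
  have h2 : -(δ ^ 2 * (1 / 5)) ≤ ∑' n, archPart a δ u n := by
    have hg : HasSum (fun n : ℕ => -(δ ^ 2 * ((1 / 6 : ℝ) * (1 / 6 : ℝ) ^ n)))
        (-(δ ^ 2 * (1 / 5))) := by
      have := (((hasSum_geometric_of_lt_one (r := (1 / 6 : ℝ)) (by norm_num) (by norm_num)).mul_left
        (1 / 6 : ℝ)).mul_left (δ ^ 2)).neg
      rwa [show (1 / 6 : ℝ) * (1 - 1 / 6)⁻¹ = 1 / 5 by norm_num] at this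
    rw [← hg.tsum_eq]
    refine hg.summable.tsum_le_tsum (fun n => ?_) (summable_archPart hδ (by linarith) u)
    rw [archPart_eq habs]
    refine neg_le_neg ?_
    rw [mul_comm (δ ^ 2)]
    refine expTent_le hδ.le hu0 fun v hv => ?_
    have hn : (0 : ℝ) ≤ n := n.cast_nonneg
    rw [abs_le] at hv
    have h6 : Real.exp (-2) ≤ 1 / 6 := by
      rw [Real.exp_neg, ← one_div]
      refine one_div_le_one_div_of_le (by norm_num) ?_
      have := Real.exp_one_gt_d9
      rw [show (2 : ℝ) = 1 + 1 by norm_num, Real.exp_add]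
      nlinarith
    have h7 : (1 / 6 : ℝ) * (1 / 6 : ℝ) ^ n = (1 / 6 : ℝ) ^ (n + 1) := by ring
    rw [h7]
    calc Real.exp (-((2 * (n + 1) + 1 / 2 + a) * v)) ≤ Real.exp ((n + 1 : ℕ) * (-2)) := by
          refine Real.exp_le_exp.mpr ?_
          push_cast
          nlinarith
      _ = Real.exp (-2) ^ (n + 1) := Real.exp_nat_mul _ _
      _ ≤ _ := by gcongr
  rw [weilW, weilV_eq_zero (u := -u) hδ.le (by linarith), weilV, tent_eq_zero habs]
  linarith

theorem log_le_mul_sqrt {x : ℝ} (hx : 2 ^ 24 ≤ x) : Real.log x ≤ 0.0041 * √x := by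
  have h2 : Real.exp 2 ≤ 2 ^ 24 := by
    have := Real.exp_one_lt_d9
    rw [show (2 : ℝ) = 1 + 1 by norm_num, Real.exp_add]
    nlinarith [Real.exp_pos 1]
  have h := Real.log_div_sqrt_antitoneOn (Set.mem_Ici.mpr h2) (Set.mem_Ici.mpr (h2.trans hx)) hx
  simp only at h
  have h3 : √((2 : ℝ) ^ 24) = 4096 := by
    rw [show (2 : ℝ) ^ 24 = 4096 ^ 2 by norm_num, Real.sqrt_sq (by norm_num)]
  rw [h3, Real.log_pow, div_le_iff₀ (Real.sqrt_pos.mpr (by linarith))] at h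
  have := Real.log_two_lt_d9
  push_cast at h
  refine h.trans (mul_le_mul_of_nonneg_right ?_ (Real.sqrt_nonneg x))
  rw [div_le_iff₀ (by norm_num)]
  linarith

theorem sixteen_le_log {x : ℝ} (hx : 2 ^ 24 ≤ x) : 16 ≤ Real.log x := by
  have h := Real.log_le_log (by norm_num) hx
  rw [Real.log_pow] at h
  have := Real.log_two_gt_d9
  push_cast at h
  linarith

theorem sum_tent_le {δ : ℝ} (hδ : 0 ≤ δ) {M : ℕ} {u : Fin M → ℝ}
    (hu : ∀ i j, i ≠ j → δ ≤ |u i - u j|) (v : ℝ) : ∑ i, tent δ (u i - v) ≤ 2 * δ := by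
  classical
  set s₁ : Finset (Fin M) := {i | v - δ < u i ∧ u i < v}
  set s₂ : Finset (Fin M) := {i | v ≤ u i ∧ u i < v + δ}
  have h1 : s₁.card ≤ 1 := Finset.card_le_one.mpr fun i hi j hj => by
    by_contra hij
    have h := hu i j hij
    simp only [s₁, Finset.mem_filter, Finset.mem_univ, true_and] at hi hj
    rcases abs_cases (u i - u j) with ⟨h', -⟩ | ⟨h', -⟩ <;> linarith
  have h2 : s₂.card ≤ 1 := Finset.card_le_one.mpr fun i hi j hj => by
    by_contra hij
    have h := hu i j hij
    simp only [s₂, Finset.mem_filter, Finset.mem_univ, true_and] at hi hj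
    rcases abs_cases (u i - u j) with ⟨h', -⟩ | ⟨h', -⟩ <;> linarith
  have h3 : ∑ i, tent δ (u i - v) = ∑ i ∈ s₁ ∪ s₂, tent δ (u i - v) := by
    refine (Finset.sum_subset (Finset.subset_univ _) fun i _ hi => tent_eq_zero ?_).symm
    by_contra! h
    rw [abs_lt] at h
    refine hi ?_
    simp only [s₁, s₂, Finset.mem_union, Finset.mem_filter, Finset.mem_univ, true_and]
    rcases lt_or_ge (u i) v with h' | h'
    · exact Or.inl ⟨by linarith, h'⟩
    · exact Or.inr ⟨h', by linarith⟩
  have h4 : (s₁ ∪ s₂).card ≤ 2 := (Finset.card_union_le _ _).trans (by omega)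
  rw [h3]
  refine (Finset.sum_le_card_nsmul _ _ δ fun i _ => tent_le hδ _).trans ?_
  rw [nsmul_eq_mul]
  exact mul_le_mul_of_nonneg_right (by exact_mod_cast h4) hδ

theorem sum_primePart_le {x δ a : ℝ} (hx : 8 ≤ x) (hδ : 0 < δ) (ha : 0 ≤ a) (ha1 : a ≤ 1 / 2)
    {M : ℕ} {u : Fin M → ℝ} (hu : ∀ i j, i ≠ j → δ ≤ |u i - u j|)
    (hlo : ∀ i, Real.log (x / 4) + δ ≤ u i) (hhi : ∀ i, u i + δ ≤ Real.log x)
    (hp : ∀ i, ∀ p : ℕ, p.Prime → Odd p → δ ≤ |u i - Real.log p|) :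
    ∑ i, ∑' n, primePart a δ (u i) n ≤ 8 * δ * Real.log x := by
  have hx0 : 0 < x := by linarith
  have hsx : 0 < √x := Real.sqrt_pos.mpr hx0
  have hS : ∀ i, Summable (primePart a δ (u i)) := fun i => summable_primePart hδ (by linarith) _
  rw [← Summable.tsum_finsetSum fun i _ => hS i]
  set s : Finset ℕ := {n ∈ Finset.Ioc 0 ⌊x⌋₊ | ¬ n.Prime}
  have hzero : ∀ n ∉ s, ∑ i, primePart a δ (u i) n = 0 := by
    intro n hn
    refine Finset.sum_eq_zero fun i _ => ?_
    rw [primePart]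
    rcases Nat.eq_zero_or_pos n with rfl | hn0
    · simp
    rw [tent_eq_zero, mul_zero]
    have hlo' := hlo i
    have hhi' := hhi i
    by_cases hnx : n ≤ ⌊x⌋₊
    · have hpr : n.Prime := by
        by_contra h
        exact hn (Finset.mem_filter.mpr ⟨Finset.mem_Ioc.mpr ⟨hn0, hnx⟩, h⟩)
      rcases hpr.eq_two_or_odd' with rfl | hodd
      · have : Real.log (2 : ℕ) ≤ Real.log (x / 4) :=
          Real.log_le_log (by norm_num) (by push_cast; linarith)
        refine le_trans ?_ (le_abs_self _)
        push_cast at this ⊢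
        linarith
      · exact hp i n hpr hodd
    · have h1 : x < n := (Nat.floor_lt hx0.le).mp (not_le.mp hnx)
      have h2 := Real.log_le_log hx0 h1.le
      rw [abs_sub_comm]
      exact le_trans (by linarith) (le_abs_self _)
  rw [tsum_eq_sum hzero]
  have hle : ∀ n ∈ s, ∑ i, primePart a δ (u i) n ≤
      4 * δ / √x * ArithmeticFunction.vonMangoldt n := by
    intro n hn
    have hΛ : 0 ≤ ArithmeticFunction.vonMangoldt n := ArithmeticFunction.vonMangoldt_nonneg
    have hn1 : 0 < n := by
      have := (Finset.mem_filter.mp hn).1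
      exact (Finset.mem_Ioc.mp this).1
    have hn1' : (1 : ℝ) ≤ n := by exact_mod_cast hn1
    simp_rw [primePart]
    rw [← Finset.mul_sum]
    rcases le_or_gt (n : ℝ) (x / 4) with h | h
    · have : ∑ i, tent δ (u i - Real.log n) = 0 := Finset.sum_eq_zero fun i _ => tent_eq_zero (by
        have h1 := Real.log_le_log (by linarith) h
        have h2 := hlo i
        exact le_trans (by linarith) (le_abs_self _))
      rw [this, mul_zero]
      positivity
    · have h1 : (n : ℝ) ^ (-(1 / 2 + a)) ≤ 2 / √x := by
        calc (n : ℝ) ^ (-(1 / 2 + a)) ≤ (n : ℝ) ^ (-(1 / 2) : ℝ) :=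
              Real.rpow_le_rpow_of_exponent_le hn1' (by linarith)
          _ ≤ (x / 4) ^ (-(1 / 2) : ℝ) :=
              Real.rpow_le_rpow_of_nonpos (by positivity) h.le (by norm_num)
          _ = 2 / √x := by
              rw [Real.rpow_neg (by positivity), ← Real.sqrt_eq_rpow, Real.sqrt_div hx0.le,
                show (4 : ℝ) = 2 ^ 2 by norm_num, Real.sqrt_sq (by norm_num), inv_div]
      have h2 := sum_tent_le hδ.le hu (Real.log n)
      have h3 : 0 ≤ ∑ i, tent δ (u i - Real.log n) := Finset.sum_nonneg fun i _ => tent_nonneg _ _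
      calc _ ≤ ArithmeticFunction.vonMangoldt n * (2 / √x) * (2 * δ) := by gcongr
        _ = _ := by ring
  refine (Finset.sum_le_sum hle).trans ?_
  rw [← Finset.mul_sum]
  have h1 : ∑ n ∈ s, ArithmeticFunction.vonMangoldt n = Chebyshev.psi x - Chebyshev.theta x :=
    (Chebyshev.psi_sub_theta_eq_sum_not_prime x).symm
  have h2 := Chebyshev.psi_sub_theta_le (x := x) (by linarith)
  rw [h1]
  calc 4 * δ / √x * (Chebyshev.psi x - Chebyshev.theta x) ≤
        4 * δ / √x * (2 * √x * Real.log x) := by gcongr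
    _ = _ := by
      field_simp
      ring

/-- Under the Riemann hypothesis, well-spaced points cannot all avoid the odd primes. -/
theorem exists_odd_prime_near (hRH : RiemannHypothesis) {x δ : ℝ} (hx : 2 ^ 24 ≤ x) (hδ : 0 < δ)
    (hδ1 : δ ≤ 1 / 100) (hδx : 61 * Real.log x ^ 2 ≤ δ * x) {M : ℕ} (hM : 0.3 ≤ M * δ)
    (hM' : M * δ ≤ 1 / 3) {u : Fin M → ℝ} (hu : ∀ i j, i ≠ j → δ ≤ |u i - u j|)
    (hlo : ∀ i, Real.log (x / 4) + δ ≤ u i) (hhi : ∀ i, u i + δ ≤ Real.log x) :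
    ∃ i, ∃ p : ℕ, p.Prime ∧ Odd p ∧ |u i - Real.log p| < δ := by
  by_contra! hp
  have hx0 : 0 < x := lt_of_lt_of_le (by norm_num) hx
  have hℓ := sixteen_le_log hx
  have hℓ' := log_le_mul_sqrt hx
  set ℓ := Real.log x
  have hsx : 4096 ≤ √x := by
    have := Real.sqrt_le_sqrt hx
    rwa [show (2 : ℝ) ^ 24 = 4096 ^ 2 by norm_num, Real.sqrt_sq (by norm_num)] at this
  have hsq : √x ^ 2 = x := Real.sq_sqrt hx0.le
  set a : ℝ := 1 / (100 * ℓ)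
  have ha : 0 < a := by positivity
  have ha1 : a ≤ 1 / 2 := by
    simp only [a]
    rw [div_le_div_iff₀ (by positivity) (by norm_num)]
    linarith
  have haℓ : a * ℓ = 1 / 100 := by
    simp only [a]
    field_simp
  have hW0 : weilW a δ 0 ≤ δ * ℓ := by
    refine (weilW_zero_le hδ ha.le ha1).trans (mul_le_mul_of_nonneg_left ?_ hδ.le)
    have h1 : Real.log (1 / δ + 2) ≤ ℓ := by
      refine Real.log_le_log (by positivity) ?_
      have h1 : 1 / δ ≤ x / 61 := by
        rw [div_le_div_iff₀ hδ (by norm_num)]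
        nlinarith
      linarith
    have h2 : 1 ≤ Real.log Real.pi := by
      rw [Real.le_log_iff_exp_le Real.pi_pos]
      have := Real.exp_one_lt_d9
      have := Real.pi_gt_three
      linarith
    have h3 : Real.exp (δ / 2) ≤ 3 := by
      have h := Real.exp_le_exp.mpr (show δ / 2 ≤ 1 by linarith)
      have := Real.exp_one_lt_d9
      linarith
    have h4 : δ * Real.exp (δ / 2) ≤ δ * 3 := mul_le_mul_of_nonneg_left h3 hδ.le
    linarith
  have hoff : ∀ i j, i ≠ j → weilW a δ (u i - u j) ≤ 2 * δ ^ 2 := by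
    intro i j hij
    refine (weilW_le hδ.le ha.le (hu i j hij)).trans (mul_le_mul_of_nonneg_right ?_ (sq_nonneg δ))
    have h4 : Real.log (x / 4) = ℓ - 2 * Real.log 2 := by
      rw [Real.log_div hx0.ne' (by norm_num), show (4 : ℝ) = 2 ^ 2 by norm_num, Real.log_pow]
      push_cast
      rfl
    have h5 : |u i - u j| + δ ≤ 2 * Real.log 2 := by
      have := hlo i
      have := hlo j
      have := hhi i
      have := hhi j
      rcases abs_cases (u i - u j) with ⟨h', -⟩ | ⟨h', -⟩ <;> linarith
    calc Real.exp ((|u i - u j| + δ) / 2) ≤ Real.exp (Real.log 2) :=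
          Real.exp_le_exp.mpr (by linarith)
      _ = 2 := Real.exp_log (by norm_num)
  have hB : ∑ i, ∑ j, weilW a δ (u i - u j) ≤ ℓ / 3 + 2 / 9 := by
    have h1 : ∀ i j, weilW a δ (u i - u j) ≤ (if i = j then δ * ℓ else 0) + 2 * δ ^ 2 := by
      intro i j
      split_ifs with h
      · rw [h, sub_self]
        nlinarith
      · rw [zero_add]
        exact hoff i j h
    refine (Finset.sum_le_sum fun i _ => Finset.sum_le_sum fun j _ => h1 i j).trans ?_
    simp only [Finset.sum_add_distrib, Finset.sum_ite_eq, Finset.mem_univ, if_true,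
      Finset.sum_const, Finset.card_univ, Fintype.card_fin, nsmul_eq_mul]
    have h2 : (M * δ) ^ 2 ≤ (1 / 3) ^ 2 := by gcongr
    have h3 : M * δ * ℓ ≤ 1 / 3 * ℓ := by gcongr
    nlinarith
  have hA : 0.11 * δ * √x ≤ ∑ i, weilW a δ (u i) := by
    have h1 := sum_primePart_le (by linarith) hδ ha.le ha1 hu hlo hhi hp
    have hlog4 : 2 ≤ Real.log (x / 4) := by
      rw [Real.le_log_iff_exp_le (by positivity)]
      have := Real.exp_one_lt_d9
      rw [show (2 : ℝ) = 1 + 1 by norm_num, Real.exp_add]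
      nlinarith [Real.exp_pos 1]
    have h2 : ∀ i, δ ^ 2 * (0.495 * √x - 1 / 5) - ∑' n, primePart a δ (u i) n ≤
        weilW a δ (u i) := by
      intro i
      have hi := hlo i
      refine le_trans ?_ (le_weilW hδ ha.le ha1 (by linarith))
      refine sub_le_sub_right (mul_le_mul_of_nonneg_left (sub_le_sub_right ?_ _) (sq_nonneg δ)) _
      have h3 : √x / 2 = Real.exp (1 / 2 * Real.log (x / 4)) := by
        rw [mul_comm, ← Real.rpow_def_of_pos (by positivity), ← Real.sqrt_eq_rpow,
          Real.sqrt_div hx0.le, show (4 : ℝ) = 2 ^ 2 by norm_num, Real.sqrt_sq (by norm_num)]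
      have h4 : Real.log (x / 4) ≤ ℓ := Real.log_le_log (by positivity) (by linarith)
      have h5 := Real.add_one_le_exp (-(1 / 100 : ℝ))
      calc 0.495 * √x = √x / 2 * (-(1 / 100) + 1) := by ring
        _ ≤ √x / 2 * Real.exp (-(1 / 100)) := by gcongr
        _ = Real.exp (1 / 2 * Real.log (x / 4) + -(1 / 100)) := by rw [h3, Real.exp_add]
        _ ≤ _ := Real.exp_le_exp.mpr (by
            have : a * Real.log (x / 4) ≤ a * ℓ := mul_le_mul_of_nonneg_left h4 ha.le
            nlinarith)
    have h3 := Finset.sum_le_sum fun i (_ : i ∈ Finset.univ) => h2 i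
    rw [Finset.sum_sub_distrib, Finset.sum_const, Finset.card_univ, Fintype.card_fin,
      nsmul_eq_mul] at h3
    refine le_trans ?_ h3
    have h4 : 0.3 * (δ * (0.495 * √x - 1 / 5)) ≤ M * δ * (δ * (0.495 * √x - 1 / 5)) :=
      mul_le_mul_of_nonneg_right hM (mul_nonneg hδ.le (by linarith))
    have h5 : δ * ℓ ≤ δ * (0.0041 * √x) := mul_le_mul_of_nonneg_left hℓ' hδ.le
    have h6 : δ * 4096 ≤ δ * √x := mul_le_mul_of_nonneg_left hsx hδ.le
    have h7 : (M : ℝ) * (δ ^ 2 * (0.495 * √x - 1 / 5)) = M * δ * (δ * (0.495 * √x - 1 / 5)) := by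
      ring
    rw [h7]
    linarith
  set A := ∑ i, weilW a δ (u i)
  set B := ∑ i, ∑ j, weilW a δ (u i - u j)
  have hpsd : ∀ c : ℝ, 0 ≤ c ^ 2 * weilW a δ 0 - 2 * c * A + B := by
    intro c
    have h := weilW_posSemidef hRH hδ ha (by linarith) Finset.univ
      (fun i : Option (Fin M) => i.elim (-c) fun _ => 1) (fun i => i.elim 0 u)
    simp only [Fintype.sum_option, Option.elim, sub_zero, zero_sub, weilW_neg, one_mul, mul_one,
      mul_neg, neg_mul, Finset.sum_add_distrib, Finset.sum_neg_distrib,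
      ← Finset.mul_sum] at h
    simp only [A, B]
    linarith
  have hWpos : 0 < δ * ℓ := by positivity
  set A₀ := 0.11 * δ * √x
  have hA₀ : 0 ≤ A₀ := by positivity
  have h := hpsd (A₀ / (δ * ℓ))
  have h1 : (A₀ / (δ * ℓ)) ^ 2 * weilW a δ 0 ≤ (A₀ / (δ * ℓ)) ^ 2 * (δ * ℓ) :=
    mul_le_mul_of_nonneg_left hW0 (sq_nonneg _)
  have h2 : (A₀ / (δ * ℓ)) ^ 2 * (δ * ℓ) = A₀ ^ 2 / (δ * ℓ) := by
    field_simp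
  have h3 : A₀ / (δ * ℓ) * A₀ ≤ A₀ / (δ * ℓ) * A := mul_le_mul_of_nonneg_left hA (by positivity)
  have h4 : A₀ / (δ * ℓ) * A₀ = A₀ ^ 2 / (δ * ℓ) := by ring
  have h5 : A₀ ^ 2 / (δ * ℓ) ≤ ℓ / 3 + 2 / 9 := by linarith
  rw [div_le_iff₀ hWpos] at h5
  have h6 : A₀ ^ 2 = 0.0121 * δ * (δ * x) := by
    rw [← hsq]
    simp only [A₀]
    ring
  have h7 : 0.0121 * δ * (61 * ℓ ^ 2) ≤ 0.0121 * δ * (δ * x) :=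
    mul_le_mul_of_nonneg_left hδx (by positivity)
  have h8 : δ * ℓ * (0.0121 * 61 * ℓ) ≤ δ * ℓ * (ℓ / 3 + 2 / 9) := by
    rw [h6] at h5
    linarith
  have h9 := le_of_mul_le_mul_left h8 hWpos
  linarith

theorem lt_mul_exp_of_abs_log_sub_log_lt {y z δ : ℝ} (hy : 0 < y) (hz : 0 < z)
    (h : |Real.log y - Real.log z| < δ) : y * Real.exp (-δ) < z ∧ z < y * Real.exp δ := by
  rw [abs_lt] at h
  constructor
  · calc y * Real.exp (-δ) = Real.exp (Real.log y + -δ) := by rw [Real.exp_add, Real.exp_log hy]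
      _ < Real.exp (Real.log z) := Real.exp_lt_exp.mpr (by linarith)
      _ = z := Real.exp_log hz
  · calc z = Real.exp (Real.log z) := (Real.exp_log hz).symm
      _ < Real.exp (Real.log y + δ) := Real.exp_lt_exp.mpr (by linarith)
      _ = _ := by rw [Real.exp_add, Real.exp_log hy]

theorem le_log_sub_log {y z δ d U : ℝ} (hz : 0 < z) (hzU : z ≤ U)
    (hd : (Real.exp δ - 1) * U ≤ d) (hδ : 0 ≤ δ) (h : d ≤ y - z) :
    δ ≤ Real.log y - Real.log z := by
  have h0 : 0 ≤ Real.exp δ - 1 := by linarith [Real.add_one_le_exp δ]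
  have h1 : (Real.exp δ - 1) * z ≤ (Real.exp δ - 1) * U := mul_le_mul_of_nonneg_left hzU h0
  have h2 : Real.exp δ * z ≤ y := by linarith
  have h3 := Real.log_le_log (by positivity) h2
  rw [Real.log_mul (Real.exp_pos δ).ne' hz.ne', Real.log_exp] at h3
  linarith

theorem le_abs_sub_of_signs {d e e' : ℝ} (hd : 0 ≤ d) {i j : ℕ} (hij : i ≠ j)
    (he : e = 1 ∨ e = -1) (he' : e' = 1 ∨ e' = -1) :
    d ≤ |e * ((i + 1 / 2) * d) - e' * ((j + 1 / 2) * d)| := by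
  have hi : (0 : ℝ) ≤ i := i.cast_nonneg
  have hj : (0 : ℝ) ≤ j := j.cast_nonneg
  have key : 1 ≤ |e * (i + 1 / 2 : ℝ) - e' * (j + 1 / 2)| := by
    rcases lt_or_gt_of_ne hij with h | h
    · have h' : (i : ℝ) + 1 ≤ j := by exact_mod_cast h
      rw [le_abs]
      rcases he with rfl | rfl <;> rcases he' with rfl | rfl
      · right; linarith
      · left; linarith
      · right; linarith
      · left; linarith
    · have h' : (j : ℝ) + 1 ≤ i := by exact_mod_cast h
      rw [le_abs]
      rcases he with rfl | rfl <;> rcases he' with rfl | rfl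
      · left; linarith
      · left; linarith
      · right; linarith
      · right; linarith
  have e1 : e * ((i + 1 / 2) * d) - e' * ((j + 1 / 2) * d) =
      (e * (i + 1 / 2 : ℝ) - e' * (j + 1 / 2)) * d := by ring
  rw [e1, abs_mul, abs_of_nonneg hd]
  exact le_mul_of_one_le_left hd key

set_option maxHeartbeats 1000000 in
theorem exists_goldbach_of_large (hRH : RiemannHypothesis) {x : ℝ} (hx : 2 ^ 24 ≤ x) :
    ∃ p q : ℕ, p.Prime ∧ q.Prime ∧ Odd p ∧ Odd q ∧ x < (p : ℝ) + q ∧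
      (p : ℝ) + q ≤ x + 123 * Real.log x ^ 2 := by
  by_contra! hno
  have hx0 : 0 < x := lt_of_lt_of_le (by norm_num) hx
  have hℓ := sixteen_le_log hx
  have hℓ' := log_le_mul_sqrt hx
  set ℓ := Real.log x with hℓdef
  have hsq : √x ^ 2 = x := Real.sq_sqrt hx0.le
  set t := 123 * ℓ ^ 2 / x with ht
  have ht0 : 0 < t := by positivity
  have htx : t * x = 123 * ℓ ^ 2 := by
    rw [ht]
    field_simp
  have ht1 : t ≤ 0.0021 := by
    have h : ℓ ^ 2 ≤ (0.0041 * √x) ^ 2 := by gcongr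
    rw [ht, div_le_iff₀ hx0]
    rw [mul_pow, hsq] at h
    linarith
  set δ := Real.log (1 + t) / 2 with hδdef
  have hexp2 : Real.exp δ * Real.exp δ = 1 + t := by
    rw [← Real.exp_add, hδdef, add_halves, Real.exp_log (by linarith)]
  have hδle : δ ≤ t / 2 := by
    have := Real.log_le_sub_one_of_pos (x := 1 + t) (by linarith)
    linarith
  have hδ1 : δ ≤ 1 / 100 := by linarith
  have hδge : t / 2 / (1 + t) ≤ δ := by
    have := Real.one_sub_inv_le_log_of_pos (x := 1 + t) (by linarith)
    have e : 1 - (1 + t)⁻¹ = t / (1 + t) := by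
      field_simp
      ring
    rw [e] at this
    rw [div_right_comm]
    linarith
  have hδ : 0 < δ := lt_of_lt_of_le (by positivity) hδge
  have hδx : 61 * ℓ ^ 2 ≤ δ * x := by
    have h : t / 2 / (1 + t) * x ≤ δ * x := mul_le_mul_of_nonneg_right hδge hx0.le
    refine le_trans ?_ h
    rw [div_mul_eq_mul_div, le_div_iff₀ (by linarith)]
    have : 61 * ℓ ^ 2 * (1 + t) ≤ 61 * ℓ ^ 2 * (1 + 0.0021) := by gcongr
    nlinarith [sq_nonneg ℓ]
  set η := Real.exp δ - 1 with hη
  have hηδ : δ ≤ η := by linarith [Real.add_one_le_exp δ]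
  have hηδ' : η ≤ δ * (1 + δ) := by
    have h := Real.abs_exp_sub_one_sub_id_le (x := δ) (by rw [abs_of_pos hδ]; linarith)
    have := (abs_le.mp h).2
    nlinarith
  have hη0 : 0 < η := by linarith
  set S := x * Real.exp δ with hS
  have hS0 : 0 < S := by positivity
  have hSx : S * Real.exp (-δ) = x := by
    rw [hS, mul_assoc, ← Real.exp_add]
    simp
  have hSx' : S * Real.exp δ = x + 123 * ℓ ^ 2 := by
    rw [hS, mul_assoc, hexp2, ← htx]
    ring
  set d := η * (3 / 4 * S) with hd
  have hd0 : 0 < d := by positivity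
  set M := ⌊1 / (3 * η)⌋₊ with hMdef
  have hM1 : (M : ℝ) ≤ 1 / (3 * η) := Nat.floor_le (by positivity)
  have hM2 : 1 / (3 * η) < M + 1 := Nat.lt_floor_add_one _
  have hMη : M * η ≤ 1 / 3 := by
    rw [le_div_iff₀ (by positivity)] at hM1
    linarith
  have hMη' : 1 / 3 ≤ (M + 1) * η := by
    rw [div_lt_iff₀ (by positivity)] at hM2
    linarith
  have hM0 : (0 : ℝ) ≤ M := M.cast_nonneg
  have hMδ : M * δ ≤ 1 / 3 := (mul_le_mul_of_nonneg_left hηδ hM0).trans hMη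
  have hMδ' : 0.3 ≤ M * δ := by
    have h1 : (M + 1) * η ≤ (M + 1) * (δ * (1 + δ)) := by gcongr
    have h2 : M * δ * δ ≤ 1 / 3 * (1 / 100) := mul_le_mul hMδ hδ1 hδ.le (by norm_num)
    nlinarith
  have hMd : M * d ≤ S / 4 := by
    calc M * d = M * η * (3 / 4 * S) := by rw [hd]; ring
      _ ≤ 1 / 3 * (3 / 4 * S) := by gcongr
      _ = S / 4 := by ring
  have hrange : ∀ e : ℝ, e = 1 ∨ e = -1 → ∀ i : Fin M,
      S / 4 ≤ S / 2 + e * ((i + 1 / 2) * d) ∧ S / 2 + e * ((i + 1 / 2) * d) ≤ 3 / 4 * S := by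
    intro e he i
    have hi : (i : ℝ) + 1 ≤ M := by exact_mod_cast i.2
    have h1 : (i + 1 / 2 : ℝ) * d ≤ M * d := mul_le_mul_of_nonneg_right (by linarith) hd0.le
    have h2 : 0 ≤ (i + 1 / 2 : ℝ) * d := by positivity
    rcases he with rfl | rfl <;> constructor <;> linarith
  have hchoice : ∀ i : Fin M, ∃ e : ℝ, (e = 1 ∨ e = -1) ∧ ∀ p : ℕ, p.Prime → Odd p →
      δ ≤ |Real.log (S / 2 + e * ((i + 1 / 2) * d)) - Real.log p| := by
    intro i
    by_contra! h
    obtain ⟨p, hp, hpo, hp'⟩ := h 1 (Or.inl rfl)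
    obtain ⟨q, hq, hqo, hq'⟩ := h (-1) (Or.inr rfl)
    have r1 := (hrange 1 (Or.inl rfl) i).1
    have r2 := (hrange (-1) (Or.inr rfl) i).1
    have b1 := lt_mul_exp_of_abs_log_sub_log_lt (by linarith) (by exact_mod_cast hp.pos) hp'
    have b2 := lt_mul_exp_of_abs_log_sub_log_lt (by linarith) (by exact_mod_cast hq.pos) hq'
    have h1 := hno p q hp hq hpo hqo (by rw [← hSx]; linarith)
    rw [← hSx'] at h1
    linarith
  choose e he hfree using hchoice
  obtain ⟨i, p, hp, hpo, hlt⟩ := exists_odd_prime_near hRH hx hδ hδ1 hδx hMδ' hMδ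
    (u := fun i => Real.log (S / 2 + e i * ((i + 1 / 2) * d))) (by
      intro i j hij
      have hdist := le_abs_sub_of_signs hd0.le (Fin.val_ne_of_ne hij) (he i) (he j)
      obtain ⟨i1, i2⟩ := hrange _ (he i) i
      obtain ⟨j1, j2⟩ := hrange _ (he j) j
      rcases le_abs.mp hdist with h | h
      · refine le_trans ?_ (le_abs_self _)
        exact le_log_sub_log (by linarith) j2 (d := d) hd.ge hδ.le (by linarith)
      · rw [abs_sub_comm]
        refine le_trans ?_ (le_abs_self _)
        exact le_log_sub_log (by linarith) i2 (d := d) hd.ge hδ.le (by linarith))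
    (by
      intro i
      obtain ⟨i1, i2⟩ := hrange _ (he i) i
      rw [← Real.log_exp δ, ← Real.log_mul (by positivity) (Real.exp_pos δ).ne']
      refine Real.log_le_log (by positivity) ?_
      refine le_trans (le_of_eq ?_) i1
      rw [hS]
      ring)
    (by
      intro i
      obtain ⟨i1, i2⟩ := hrange _ (he i) i
      have h1 : Real.log (S / 2 + e i * ((i + 1 / 2) * d)) ≤ Real.log (3 / 4 * S) :=
        Real.log_le_log (by linarith) i2
      have h2 : Real.log (3 / 4 * S) + δ ≤ Real.log x := by
        rw [← Real.log_exp δ, ← Real.log_mul (by positivity) (Real.exp_pos δ).ne',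
          mul_assoc, hSx', ← htx]
        refine Real.log_le_log (by positivity) ?_
        nlinarith
      linarith)
  exact absurd (hfree i p hp hpo) (not_le.mpr hlt)

/-- `noOddDivisor n f` checks that none of `3, 5, …, 2 * f + 1` divides `n`. -/
def noOddDivisor (n : ℕ) : ℕ → Bool
  | 0 => true
  | k + 1 =>
    match Nat.beq (Nat.mod n (Nat.add (Nat.mul 2 k) 3)) 0 with
    | true => false
    | false => noOddDivisor n k

lemma not_dvd_of_noOddDivisor {n k f : ℕ} (h : noOddDivisor n f = true) (hk : k < f) :
    ¬ 2 * k + 3 ∣ n := by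
  induction f with
  | zero => omega
  | succ f ih =>
    rw [noOddDivisor] at h
    split at h
    · exact absurd h (by simp)
    · rename_i hb
      rcases Nat.lt_succ_iff_lt_or_eq.mp hk with hk | rfl
      · exact ih h hk
      · intro hdvd
        have h0 : n.mod ((Nat.mul 2 k).add 3) = 0 := Nat.mod_eq_zero_of_dvd hdvd
        rw [h0] at hb
        exact absurd hb (by decide)

lemma prime_of_noOddDivisor {n : ℕ} (hn : 2 < n) (ho : n % 2 = 1)
    (h : noOddDivisor n (2 ^ (n.log2 / 2)) = true) : n.Prime := by
  rw [Nat.prime_def_le_sqrt]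
  refine ⟨hn.le, fun m hm hms hdvd => ?_⟩
  have hms := Nat.le_sqrt.mp hms
  have hmo : m % 2 = 1 := Nat.odd_iff.mp ((Nat.odd_iff.mpr ho).of_dvd_nat hdvd)
  have hlt : n < 2 ^ (n.log2 + 1) := Nat.lt_log2_self
  have hle : 2 ^ (n.log2 + 1) ≤ (2 * 2 ^ (n.log2 / 2)) * (2 * 2 ^ (n.log2 / 2)) := by
    rw [← pow_succ', ← pow_add]
    exact Nat.pow_le_pow_right (by norm_num) (by omega)
  have hm2 : m < 2 * 2 ^ (n.log2 / 2) := by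
    by_contra! hge
    have := Nat.mul_le_mul hge hge
    omega
  exact not_dvd_of_noOddDivisor h (show (m - 3) / 2 < _ by omega)
    (by rwa [show 2 * ((m - 3) / 2) + 3 = m by omega])

/-- Odd primes up to about `2 ^ 18`, each obtained from the previous one by a short step. -/
def shortSteps : List ℕ :=
  [239, 3121, 10259, 20219, 31771, 43331, 56599, 69859, 84961, 100057, 115153, 130253, 145349,
   162391, 179441, 196477, 213523, 230567, 247613, 264659]

/-- Odd primes up to about `2 ^ 24` with gaps less than `2 ^ 18`. -/
def longSteps : List ℕ :=
  [262139, 524269, 786407, 1048549, 1310681, 1572821, 1834919, 2097047, 2359187, 2621309,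
   2883443, 3145577, 3407693, 3669833, 3931969, 4194107, 4456223, 4718353, 4980427, 5242561,
   5504671, 5766811, 6028933, 6291059, 6553187, 6815327, 7077467, 7339609, 7601749, 7863881,
   8126009, 8388113, 8650253, 8912389, 9174521, 9436657, 9698791, 9960901, 10223041, 10485151,
   10747273, 11009413, 11271529, 11533663, 11795801, 12057919, 12320057, 12582191, 12844331,
   13106453, 13368587, 13630709, 13892843, 14154971, 14417111, 14679209, 14941331, 15203449,
   15465551, 15727681, 15989821, 16251953, 16514063, 16776191]

lemma prime_of_mem {l : List ℕ}
    (h : (l.all fun p => p % 2 == 1 && (Nat.ble 3 p && noOddDivisor p (2 ^ (p.log2 / 2)))) = true)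
    {p : ℕ} (hp : p ∈ l) : p.Prime ∧ Odd p := by
  have h := List.all_eq_true.mp h p hp
  simp only [Bool.and_eq_true, beq_iff_eq, Nat.ble_eq] at h
  obtain ⟨ho, h3, h⟩ := h
  exact ⟨prime_of_noOddDivisor h3 ho h, Nat.odd_iff.mpr ho⟩

lemma exists_mem_of_isChain {G : ℕ → ℕ} (hG : Monotone G) {m b : ℕ} :
    ∀ {a : ℕ} {l : List ℕ}, List.IsChain (fun p q => q ≤ p + G p) (a :: l) → a ≤ m →
      b ∈ l → m < b → ∃ q ∈ l, m < q ∧ q ≤ m + G m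
  | _, [], _, _, hb, _ => by simp at hb
  | a, c :: l, h, ham, hb, hmb => by
    rw [List.isChain_cons_cons] at h
    by_cases hc : m < c
    · exact ⟨c, by simp, hc, h.1.trans (Nat.add_le_add ham (hG ham))⟩
    · have hb : b ∈ l := by
        rcases List.mem_cons.mp hb with rfl | hb
        · exact absurd hmb hc
        · exact hb
      obtain ⟨q, hq, h'⟩ := exists_mem_of_isChain hG h.2 (not_lt.mp hc) hb hmb
      exact ⟨q, List.mem_cons_of_mem _ hq, h'⟩

lemma monotone_step : Monotone fun p : ℕ => 59 * (p + 3).log2 ^ 2 := by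
  intro p q h
  have : (p + 3).log2 ≤ (q + 3).log2 := by
    rw [Nat.le_log2 (by omega)]
    exact (Nat.log2_self_le (by omega)).trans (by omega)
  dsimp only
  gcongr

lemma exists_prime_add_three {m : ℕ} (hm : 2 ≤ m) (hm' : m < 2 ^ 18) :
    ∃ q : ℕ, q.Prime ∧ Odd q ∧ m < q + 3 ∧ q + 3 ≤ m + 59 * m.log2 ^ 2 := by
  rcases lt_or_ge m 6 with h6 | h6
  · exact ⟨3, Nat.prime_three, by decide, by omega, by interval_cases m <;> decide⟩
  · obtain ⟨k, rfl⟩ := Nat.exists_eq_add_of_le' (show 3 ≤ m by omega)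
    obtain ⟨q, hq, h1, h2⟩ := exists_mem_of_isChain monotone_step (m := k) (b := 264659)
      (l := shortSteps) (a := 3) (by decide +kernel) (by omega) (by decide +kernel) (by omega)
    obtain ⟨hp, ho⟩ := prime_of_mem (l := shortSteps) (by decide +kernel) hq
    exact ⟨q, hp, ho, by omega, by omega⟩

lemma exists_prime_near_below {m : ℕ} (hm : 2 ^ 18 ≤ m) (hm' : m < 2 ^ 24) :
    ∃ p : ℕ, p.Prime ∧ Odd p ∧ p ≤ m + 1 ∧ m + 3 < p + 2 ^ 18 := by
  obtain ⟨q, hq, h1, h2⟩ := exists_mem_of_isChain (G := fun _ => 2 ^ 18 - 2) monotone_const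
    (m := m + 3 - 2 ^ 18) (b := 16776191) (l := longSteps) (a := 3) (by decide +kernel) (by omega)
    (by decide +kernel) (by omega)
  obtain ⟨hp, ho⟩ := prime_of_mem (l := longSteps) (by decide +kernel) hq
  exact ⟨q, hp, ho, by omega, by omega⟩

lemma exists_goldbach_nat {m : ℕ} (hm : 2 ≤ m) (hm' : m < 2 ^ 24) :
    ∃ p q : ℕ, p.Prime ∧ q.Prime ∧ Odd p ∧ Odd q ∧ m < p + q ∧
      p + q ≤ m + 59 * m.log2 ^ 2 := by
  rcases lt_or_ge m (2 ^ 18) with h | h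
  · obtain ⟨q, hq, ho, h1, h2⟩ := exists_prime_add_three hm h
    exact ⟨q, 3, hq, Nat.prime_three, ho, by decide, h1, h2⟩
  · obtain ⟨p, hp, hpo, h1, h2⟩ := exists_prime_near_below h hm'
    obtain ⟨q, hq, hqo, h3, h4⟩ := exists_prime_add_three (m := m + 3 - p) (by omega) (by omega)
    have hlog : (m + 3 - p).log2 ≤ m.log2 := by
      rw [Nat.le_log2 (by omega)]
      exact (Nat.log2_self_le (by omega)).trans (by omega)
    have : 59 * (m + 3 - p).log2 ^ 2 ≤ 59 * m.log2 ^ 2 := by gcongr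
    exact ⟨p, q, hp, hq, hpo, hqo, by omega, by omega⟩

theorem exists_goldbach_of_small {x : ℝ} (hx : 2 ≤ x) (hx' : x < 2 ^ 24) :
    ∃ p q : ℕ, p.Prime ∧ q.Prime ∧ Odd p ∧ Odd q ∧ x < (p : ℝ) + q ∧
      (p : ℝ) + q ≤ x + 123 * Real.log x ^ 2 := by
  have hx0 : 0 ≤ x := by linarith
  have hm : 2 ≤ ⌊x⌋₊ := Nat.le_floor (by exact_mod_cast hx)
  have hfl : (⌊x⌋₊ : ℝ) ≤ x := Nat.floor_le hx0
  obtain ⟨p, q, hp, hq, hpo, hqo, h1, h2⟩ := exists_goldbach_nat hm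
    ((Nat.floor_lt hx0).mpr (by exact_mod_cast hx'))
  refine ⟨p, q, hp, hq, hpo, hqo, ?_, ?_⟩
  · exact_mod_cast (Nat.floor_lt hx0).mp h1
  · have h3 : (p : ℝ) + q ≤ ⌊x⌋₊ + 59 * (⌊x⌋₊.log2 : ℝ) ^ 2 := by exact_mod_cast h2
    have h4 : (2 : ℝ) ^ ⌊x⌋₊.log2 ≤ x :=
      le_trans (by exact_mod_cast Nat.log2_self_le (by omega)) hfl
    have h5 : (⌊x⌋₊.log2 : ℝ) * 0.693 ≤ Real.log x := by
      refine le_trans ?_ (Real.log_le_log (by positivity) h4)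
      rw [Real.log_pow]
      gcongr
      linarith [Real.log_two_gt_d9]
    have h6 : ((⌊x⌋₊.log2 : ℝ) * 0.693) ^ 2 ≤ Real.log x ^ 2 := by gcongr
    nlinarith [sq_nonneg (⌊x⌋₊.log2 : ℝ)]

end GoldbachRH

/-- Assuming the Riemann Hypothesis, for every real `x ≥ 2` there is a Goldbach number
(a sum of two odd primes) in the interval `(x, x + 123 * (log x)^2]`. -/
theorem goldbach_number_in_short_interval (hRH : RiemannHypothesis) :
    ∀ x : ℝ, 2 ≤ x → ∃ n : ℕ,
      x < (n : ℝ) ∧ (n : ℝ) ≤ x + 123 * Real.log x ^ 2 ∧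
      ∃ p q : ℕ, p.Prime ∧ q.Prime ∧ Odd p ∧ Odd q ∧ n = p + q := by
  intro x hx
  obtain ⟨p, q, hp, hq, hpo, hqo, h1, h2⟩ : ∃ p q : ℕ, p.Prime ∧ q.Prime ∧ Odd p ∧ Odd q ∧
      x < (p : ℝ) + q ∧ (p : ℝ) + q ≤ x + 123 * Real.log x ^ 2 := by
    rcases lt_or_ge x (2 ^ 24) with h | h
    · exact GoldbachRH.exists_goldbach_of_small hx h
    · exact GoldbachRH.exists_goldbach_of_large hRH h
  exact ⟨p + q, by exact_mod_cast h1, by exact_mod_cast h2, p, q, hp, hq, hpo, hqo, rfl⟩
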